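/- arXiv:1006.3247 — 3 statements merged into one kernel-verified Lean document; each statement's English description precedes it below -/
import Mathlib

section
/- Let n ≥ p ≥ 1 be integers, let U be a Haar-distributed random unitary matrix in U(n), and let (i_1,…,i_p), (i'_1,…,i'_p), (j_1,…,j_p), (j'_1,…,j'_p) be p-tuples of indices from {1,…,n}. Then E[U_{i_1 j_1}⋯U_{i_p j_p} · conj(U_{i'_1 j'_1})⋯conj(U_{i'_p j'_p})] = Σ_{σ,τ ∈ S_p} δ_{i_1, i'_{σ(1)}}⋯δ_{i_p, i'_{σ(p)}} · δ_{j_1, j'_{τ(1)}}⋯δ_{j_p, j'_{τ(p)}} · Wg(n, τσ^{-1}). -/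
open MeasureTheory Matrix Filter

noncomputable section

instance matMS (m n : Type*) : MeasurableSpace (Matrix m n ℂ) :=
  inferInstanceAs (MeasurableSpace (m → n → ℂ))

/-- number of cycles of a permutation, fixed points included -/
def ncycles {α : Type*} [Fintype α] [DecidableEq α] (σ : Equiv.Perm α) : ℕ :=
  Fintype.card α - σ.cycleType.sum + σ.cycleType.card

lemma card_quot_eq_ncycles {α : Type*} [Fintype α] [DecidableEq α] (σ : Equiv.Perm α)
    [Fintype (Quotient (Equiv.Perm.SameCycle.setoid σ))] :
    Fintype.card (Quotient (Equiv.Perm.SameCycle.setoid σ)) = ncycles σ := by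
  classical
  have e : Quotient (Equiv.Perm.SameCycle.setoid σ) ≃
      {x // x ∈ (σ.supportᶜ : Finset α)} ⊕ {c // c ∈ σ.cycleFactorsFinset} := by
    let f : α → {x // x ∈ (σ.supportᶜ : Finset α)} ⊕ {c // c ∈ σ.cycleFactorsFinset} :=
      fun x => if h : x ∈ σ.support then
        Sum.inr ⟨σ.cycleOf x, Equiv.Perm.cycleOf_mem_cycleFactorsFinset_iff.2 h⟩
        else Sum.inl ⟨x, by simpa using h⟩
    have hf : ∀ x y, σ.SameCycle x y ↔ f x = f y := by
      intro x y
      by_cases hx : x ∈ σ.support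
      · by_cases hy : y ∈ σ.support
        · simp only [f, hx, hy, dif_pos, Sum.inr.injEq, Subtype.mk.injEq]
          exact Equiv.Perm.sameCycle_iff_cycleOf_eq_of_mem_support hx hy
        · simp only [f, hx, hy, dif_pos, dif_neg, not_false_eq_true, reduceCtorEq, iff_false]
          intro h
          rw [h.mem_support_iff] at hx
          exact hy hx
      · by_cases hy : y ∈ σ.support
        · simp only [f, hx, hy, dif_pos, dif_neg, not_false_eq_true, reduceCtorEq, iff_false]
          intro h
          rw [← h.mem_support_iff] at hy
          exact hx hy
        · simp only [f, hx, hy, dif_neg, not_false_eq_true, Sum.inl.injEq, Subtype.mk.injEq]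
          constructor
          · intro h
            exact h.eq_of_left (by simpa [Function.IsFixedPt] using hx)
          · rintro rfl
            exact Equiv.Perm.SameCycle.refl _ _
    refine Equiv.ofBijective (Quotient.lift f (fun x y h => (hf x y).1 h)) ⟨?_, ?_⟩
    · intro a b
      induction a using Quotient.inductionOn
      induction b using Quotient.inductionOn
      intro h
      exact Quotient.sound ((hf _ _).2 h)
    · rintro (⟨x, hx⟩ | ⟨c, hc⟩)
      · refine ⟨Quotient.mk _ x, ?_⟩
        have : x ∉ σ.support := by simpa using hx
        simp only [Quotient.lift_mk, f, this, dif_neg, not_false_eq_true]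
      · have hc' := hc
        rw [Equiv.Perm.mem_cycleFactorsFinset_iff] at hc'
        obtain ⟨x, hx⟩ := hc'.1.nonempty_support
        have hxs : x ∈ σ.support := Equiv.Perm.mem_cycleFactorsFinset_support_le hc hx
        refine ⟨Quotient.mk _ x, ?_⟩
        simp only [Quotient.lift_mk, f, hxs, dif_pos]
        congr 2
        exact (Equiv.Perm.cycle_is_cycleOf hx hc).symm
  rw [Fintype.card_congr e, Fintype.card_sum, Fintype.card_coe, Fintype.card_coe,
    Finset.card_compl, ncycles, Equiv.Perm.sum_cycleType, Equiv.Perm.cycleType]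
  simp

lemma fixed_count {p n : ℕ} (σ : Equiv.Perm (Fin p)) :
    ∑ i : Fin p → Fin n, (if ∀ a, i (σ a) = i a then (1 : ℂ) else 0) =
      ((n : ℝ) ^ ncycles σ : ℝ) := by
  classical
  have e : {i : Fin p → Fin n // ∀ a, i (σ a) = i a} ≃
      (Quotient (Equiv.Perm.SameCycle.setoid σ) → Fin n) :=
    { toFun := fun i => Quotient.lift i.1 (by
        rintro a b ⟨k, rfl⟩
        have h1 : ∀ (m : ℕ) a, i.1 ((σ ^ m) a) = i.1 a := by
          intro m
          induction m with
          | zero => simp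
          | succ m ih => intro a; rw [pow_succ, Equiv.Perm.mul_apply, ih, i.2]
        obtain ⟨m, rfl | rfl⟩ := k.eq_nat_or_neg
        · simp [h1]
        · have h2 := h1 m ((σ ^ (-(m : ℤ))) a)
          rw [← h2]
          simp)
      invFun := fun g => ⟨fun a => g (Quotient.mk _ a), fun a => by
        refine congrArg g ?_
        exact Quotient.sound (s := Equiv.Perm.SameCycle.setoid σ)
          ((Equiv.Perm.SameCycle.refl σ a).apply_left)⟩
      left_inv := fun i => rfl
      right_inv := fun g => by
        ext a
        induction a using Quotient.inductionOn
        rfl }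
  rw [Finset.sum_boole, ← Fintype.card_subtype, Fintype.card_congr e, Fintype.card_fun,
    card_quot_eq_ncycles]
  simp

lemma ncycles_conj {α : Type*} [Fintype α] [DecidableEq α] (σ τ : Equiv.Perm α) :
    ncycles (σ * τ) = ncycles (τ * σ) := by
  have : σ * τ = σ * (τ * σ) * σ⁻¹ := by group
  rw [ncycles, ncycles, this, Equiv.Perm.cycleType_conj]

/-- tensor power of a matrix -/
def tpow (p : ℕ) {n : ℕ} (A : Matrix (Fin n) (Fin n) ℂ) :
    Matrix (Fin p → Fin n) (Fin p → Fin n) ℂ := fun i k => ∏ a, A (i a) (k a)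

lemma tpow_mul (p : ℕ) {n : ℕ} (A B : Matrix (Fin n) (Fin n) ℂ) :
    tpow p (A * B) = tpow p A * tpow p B := by
  ext i k
  simp only [tpow, Matrix.mul_apply, ← Finset.prod_mul_distrib]
  rw [Finset.prod_univ_sum, Fintype.piFinset_univ]

lemma tpow_one (p : ℕ) {n : ℕ} : tpow p (1 : Matrix (Fin n) (Fin n) ℂ) = 1 := by
  ext i k
  simp only [tpow, Matrix.one_apply, Finset.prod_ite_zero, funext_iff]
  simp

lemma tpow_diag_apply (p : ℕ) {n : ℕ} (d : Fin n → ℂ) :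
    tpow p (Matrix.diagonal d) = Matrix.diagonal (fun i => ∏ a, d (i a)) := by
  ext i k
  by_cases h : i = k
  · subst h; simp [tpow]
  · obtain ⟨a, ha⟩ := Function.ne_iff.1 h
    rw [Matrix.diagonal_apply_ne _ h]
    exact Finset.prod_eq_zero (Finset.mem_univ a) (Matrix.diagonal_apply_ne _ ha)

/-- permutation operator -/
def permOp {p : ℕ} (n : ℕ) (σ : Equiv.Perm (Fin p)) :
    Matrix (Fin p → Fin n) (Fin p → Fin n) ℂ := fun i k => if ∀ a, i a = k (σ a) then 1 else 0

lemma permOp_comm {p n : ℕ} (σ : Equiv.Perm (Fin p)) (A : Matrix (Fin n) (Fin n) ℂ) :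
    permOp n σ * tpow p A = tpow p A * permOp n σ := by
  ext i k
  simp only [Matrix.mul_apply, permOp, tpow]
  have h1 : ∀ l : Fin p → Fin n, (∀ a, i a = l (σ a)) ↔ l = i ∘ σ.symm := by
    intro l
    constructor
    · intro h; ext a; simp [h]
    · rintro rfl; simp
  have h2 : ∀ l : Fin p → Fin n, (∀ a, l a = k (σ a)) ↔ l = k ∘ σ := by
    intro l; simp [funext_iff]
  simp only [h1, h2, ite_mul, one_mul, zero_mul, mul_ite, mul_one, mul_zero,
    Finset.sum_ite_eq', Finset.mem_univ, if_true]
  rw [← Equiv.prod_comp σ]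
  simp

section commutant
variable {p n : ℕ} (T : Matrix (Fin p → Fin n) (Fin p → Fin n) ℂ)

lemma count_eq (hT : ∀ V ∈ Matrix.unitaryGroup (Fin n) ℂ, T * tpow p V = tpow p V * T)
    (i k : Fin p → Fin n) (h : T i k ≠ 0) (x : Fin n) :
    (Finset.univ.filter (fun a => i a = x)).card = (Finset.univ.filter (fun a => k a = x)).card := by
  have hz := Complex.isPrimitiveRoot_exp (p + 1) (by omega)
  set z := Complex.exp (2 * Real.pi * Complex.I / ((p + 1 : ℕ) : ℂ)) with hzdef
  have hn : ‖z‖ = 1 := hz.norm'_eq_one (by omega)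
  have hzz : z * (starRingEnd ℂ) z = 1 := by
    rw [Complex.mul_conj, Complex.normSq_eq_norm_sq, hn]; simp
  let d : Fin n → ℂ := fun y => if y = x then z else 1
  have hV : Matrix.diagonal d ∈ Matrix.unitaryGroup (Fin n) ℂ := by
    rw [Matrix.mem_unitaryGroup_iff, Matrix.star_eq_conjTranspose, Matrix.diagonal_conjTranspose,
      Matrix.diagonal_mul_diagonal, ← Matrix.diagonal_one]
    congr 1
    ext y
    by_cases hy : y = x <;> simp [d, hy, hzz]
  have := congrFun (congrFun (hT _ hV) i) k
  rw [tpow_diag_apply, Matrix.mul_diagonal, Matrix.diagonal_mul, mul_comm] at this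
  have h3 := mul_right_cancel₀ h this
  simp only [d, Finset.prod_ite, Finset.prod_const, one_pow, mul_one] at h3
  have hb : ∀ l : Fin p → Fin n, (Finset.univ.filter (fun a => l a = x)).card < p + 1 := by
    intro l
    have := Finset.card_filter_le (Finset.univ : Finset (Fin p)) (fun a => l a = x)
    simp at this
    omega
  exact (hz.pow_inj (hb k) (hb i) h3).symm

lemma comm_diag (hT : ∀ V ∈ Matrix.unitaryGroup (Fin n) ℂ, T * tpow p V = tpow p V * T)
    (d : Fin n → ℂ) : T * tpow p (Matrix.diagonal d) = tpow p (Matrix.diagonal d) * T := by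
  ext i k
  rw [tpow_diag_apply, Matrix.mul_diagonal, Matrix.diagonal_mul]
  by_cases h : T i k = 0
  · simp [h]
  · have hc := count_eq T hT i k h
    have e : ∀ l : Fin p → Fin n, ∏ a, d (l a) =
        ∏ x, d x ^ (Finset.univ.filter (fun a => l a = x)).card := by
      intro l
      rw [← Finset.prod_fiberwise Finset.univ l (fun a => d (l a))]
      refine Finset.prod_congr rfl fun x _ => ?_
      rw [← Finset.prod_const]
      refine Finset.prod_congr rfl fun a ha => ?_
      rw [(Finset.mem_filter.1 ha).2]
    rw [e i, e k, mul_comm]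
    simp only [hc]

lemma comm_herm (hT : ∀ V ∈ Matrix.unitaryGroup (Fin n) ℂ, T * tpow p V = tpow p V * T)
    (A : Matrix (Fin n) (Fin n) ℂ) (hA : A.IsHermitian) : T * tpow p A = tpow p A * T := by
  have hs := hA.spectral_theorem
  rw [Unitary.conjStarAlgAut_apply] at hs
  rw [hs, tpow_mul, tpow_mul, ← mul_assoc, ← mul_assoc, hT _ hA.eigenvectorUnitary.2,
    mul_assoc (tpow p _) T, comm_diag T hT, mul_assoc _ _ (tpow p (star _)),
    mul_assoc _ T, hT (star (hA.eigenvectorUnitary : Matrix (Fin n) (Fin n) ℂ))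
      (star hA.eigenvectorUnitary).2]
  simp only [mul_assoc]

lemma comm_all (hT : ∀ V ∈ Matrix.unitaryGroup (Fin n) ℂ, T * tpow p V = tpow p V * T)
    (A : Matrix (Fin n) (Fin n) ℂ) : T * tpow p A = tpow p A * T := by
  obtain ⟨H, K, hH, hK, hA⟩ : ∃ H K : Matrix (Fin n) (Fin n) ℂ, H.IsHermitian ∧ K.IsHermitian ∧
      A = H + Complex.I • K := by
    refine ⟨(1 / 2 : ℂ) • (A + Aᴴ), (-Complex.I / 2) • (A - Aᴴ), ?_, ?_, ?_⟩
    · ext i j; simp [Matrix.conjTranspose_apply]; ring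
    · ext i j; simp [Matrix.conjTranspose_apply]; ring
    · ext i j
      simp
      linear_combination (1 / 2 * (A i j - (starRingEnd ℂ) (A j i))) * Complex.I_sq
  ext i k
  let L : Fin n → Fin n → Polynomial ℂ :=
    fun x y => Polynomial.C (H x y) + Polynomial.C (K x y) * Polynomial.X
  let P : Polynomial ℂ := ∑ l : Fin p → Fin n, Polynomial.C (T i l) * ∏ a, L (l a) (k a) -
    ∑ l : Fin p → Fin n, (∏ a, L (i a) (l a)) * Polynomial.C (T l k)
  have hP : ∀ t : ℂ, P.eval t = (T * tpow p (H + t • K)) i k - (tpow p (H + t • K) * T) i k := by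
    intro t
    simp [P, L, Matrix.mul_apply, tpow, Polynomial.eval_finsetSum, Polynomial.eval_prod,
      mul_comm t]
  have hP0 : P = 0 := by
    apply Polynomial.eq_zero_of_infinite_isRoot
    refine (Set.infinite_range_of_injective Complex.ofReal_injective).mono ?_
    rintro _ ⟨t, rfl⟩
    show P.eval _ = 0
    rw [hP, comm_herm T hT, sub_self]
    refine hH.add ?_
    ext i j
    simp [Matrix.conjTranspose_apply]
    left
    exact hK.apply i j
  have := hP Complex.I
  rw [hP0, ← hA] at this
  simp at this
  exact (sub_eq_zero.1 this.symm)

lemma mem_span (hpn : p ≤ n)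
    (hT : ∀ V ∈ Matrix.unitaryGroup (Fin n) ℂ, T * tpow p V = tpow p V * T) :
    ∃ c : Equiv.Perm (Fin p) → ℂ, T = ∑ σ, c σ • permOp n σ := by
  let ι : Fin p → Fin n := Fin.castLE hpn
  have hι : Function.Injective ι := Fin.castLE_injective hpn
  refine ⟨fun σ => T (ι ∘ σ) ι, ?_⟩
  set S := ∑ σ : Equiv.Perm (Fin p), T (ι ∘ σ) ι • permOp n σ with hS
  have hcomm : ∀ A, (T - S) * tpow p A = tpow p A * (T - S) := by
    intro A
    rw [sub_mul, mul_sub, comm_all T hT, hS, Finset.sum_mul, Finset.mul_sum]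
    simp only [Matrix.smul_mul, Matrix.mul_smul, permOp_comm]
  have hcol : ∀ i, (T - S) i ι = 0 := by
    intro i
    rw [Matrix.sub_apply, sub_eq_zero, hS, Matrix.sum_apply]
    simp only [Matrix.smul_apply, permOp, smul_eq_mul, mul_ite, mul_one, mul_zero]
    by_cases h : ∃ σ : Equiv.Perm (Fin p), i = ι ∘ σ
    · obtain ⟨σ, rfl⟩ := h
      have : ∀ τ : Equiv.Perm (Fin p), (∀ a, (ι ∘ σ) a = ι (τ a)) ↔ τ = σ := by
        intro τ
        simp only [Function.comp, hι.eq_iff]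
        exact ⟨fun h => Equiv.ext fun a => (h a).symm, fun h a => by rw [h]⟩
      simp only [this]
      simp
    · rw [Finset.sum_eq_zero]
      · by_contra h0
        apply h
        have hc := count_eq T hT i ι h0
        have hex : ∀ a, ∃ b, i b = ι a := by
          intro a
          have h1 : 0 < (Finset.univ.filter (fun b => i b = ι a)).card := by
            rw [hc]; exact Finset.card_pos.2 ⟨a, by simp⟩
          obtain ⟨b, hb⟩ := Finset.card_pos.1 h1
          exact ⟨b, (Finset.mem_filter.1 hb).2⟩
        choose f hf using hex
        have hinj : Function.Injective f := by
          intro a b hab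
          apply hι
          rw [← hf a, ← hf b, hab]
        let e := Equiv.ofBijective f (Finite.injective_iff_bijective.1 hinj)
        refine ⟨e.symm, ?_⟩
        ext a
        simp only [Function.comp, ← hf]
        congr 2
        exact (e.apply_symm_apply a).symm
      · intro σ _
        rw [if_neg]
        intro h2
        exact h ⟨σ, funext h2⟩
  rw [← sub_eq_zero]
  ext i k
  let A : Matrix (Fin n) (Fin n) ℂ := fun x y => if ∃ a, ι a = y ∧ x = k a then 1 else 0
  have h1 := congrFun (congrFun (hcomm A) i) ι
  rw [Matrix.mul_apply, Matrix.mul_apply] at h1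
  simp only [hcol, mul_zero, Finset.sum_const_zero] at h1
  rw [Finset.sum_eq_single k] at h1
  · have : tpow p A k ι = 1 := by
      refine Finset.prod_eq_one fun a _ => ?_
      exact if_pos ⟨a, rfl, rfl⟩
    simpa [this] using h1
  · intro l _ hl
    obtain ⟨a, ha⟩ := Function.ne_iff.1 hl
    have : tpow p A l ι = 0 := by
      refine Finset.prod_eq_zero (Finset.mem_univ a) (if_neg ?_)
      rintro ⟨b, hb, hb'⟩
      rw [hι hb] at hb'
      exact ha hb'
    rw [this, mul_zero]
  · simp

end commutant

section integral
variable {n p : ℕ} (μ : Measure (Matrix.unitaryGroup (Fin n) ℂ)) [IsProbabilityMeasure μ]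

lemma measurable_entry (x y : Fin n) :
    Measurable (fun U : Matrix.unitaryGroup (Fin n) ℂ => (U : Matrix (Fin n) (Fin n) ℂ) x y) :=
  (measurable_pi_apply y).comp ((measurable_pi_apply (X := fun _ : Fin n => Fin n → ℂ) x).comp
    measurable_subtype_coe)

/-- the integrand -/
def integrand (i i' j j' : Fin p → Fin n) (U : Matrix.unitaryGroup (Fin n) ℂ) : ℂ :=
  (∏ a, (U : Matrix (Fin n) (Fin n) ℂ) (i a) (j a)) *
        ∏ a, (starRingEnd ℂ) ((U : Matrix (Fin n) (Fin n) ℂ) (i' a) (j' a))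

lemma measurable_integrand (i i' j j' : Fin p → Fin n) : Measurable (integrand i i' j j') := by
  unfold integrand
  refine Measurable.mul ?_ ?_
  · exact Finset.measurable_prod _ fun a _ => measurable_entry _ _
  · refine Finset.measurable_prod _ fun a _ => ?_
    exact Complex.continuous_conj.measurable.comp (measurable_entry _ _)

lemma integrable_integrand (i i' j j' : Fin p → Fin n) : Integrable (integrand i i' j j') μ := by
  refine Integrable.of_bound (measurable_integrand i i' j j').aestronglyMeasurable 1 ?_
  refine Filter.Eventually.of_forall fun U => ?_
  have h : ∀ x y, ‖(U : Matrix (Fin n) (Fin n) ℂ) x y‖ ≤ 1 := entry_norm_bound_of_unitary U.2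
  rw [integrand, norm_mul, norm_prod, norm_prod]
  refine mul_le_one₀ ?_ (by positivity) ?_
  · exact Finset.prod_le_one (fun _ _ => norm_nonneg _) fun _ _ => h _ _
  · refine Finset.prod_le_one (fun _ _ => norm_nonneg _) fun _ _ => ?_
    rw [RCLike.norm_conj]
    exact h _ _

/-- the moment matrix, for fixed column indices -/
def momentMat (j j' : Fin p → Fin n) : Matrix (Fin p → Fin n) (Fin p → Fin n) ℂ :=
  fun i i' => ∫ U, integrand i i' j j' U ∂μ

lemma tpow_star (V : Matrix (Fin n) (Fin n) ℂ) (i k : Fin p → Fin n) :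
    tpow p (star V) i k = (starRingEnd ℂ) (tpow p V k i) := by
  simp [tpow, Matrix.star_apply]

lemma moment_inv (hinv : ∀ V : Matrix.unitaryGroup (Fin n) ℂ, μ.map (fun W => V * W) = μ)
    (j j' : Fin p → Fin n) (V : Matrix.unitaryGroup (Fin n) ℂ) :
    tpow p (V : Matrix (Fin n) (Fin n) ℂ) * momentMat μ j j' *
      tpow p (star (V : Matrix (Fin n) (Fin n) ℂ)) = momentMat μ j j' := by
  ext i i'
  have hm : AEMeasurable (fun W => V * W) μ :=
    aemeasurable_of_map_neZero (by rw [hinv]; infer_instance)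
  have h1 : momentMat μ j j' i i' = ∫ U, integrand i i' j j' (V * U) ∂μ := by
    rw [momentMat]
    conv_lhs => rw [← hinv V]
    rw [integral_map hm (measurable_integrand i i' j j').aestronglyMeasurable]
  have h2 : ∀ U, integrand i i' j j' (V * U) = ∑ k' : Fin p → Fin n, ∑ k : Fin p → Fin n,
      tpow p (V : Matrix (Fin n) (Fin n) ℂ) i k *
        tpow p (star (V : Matrix (Fin n) (Fin n) ℂ)) k' i' * integrand k k' j j' U := by
    intro U
    have e : ∀ (i j : Fin p → Fin n) (U : Matrix (Fin n) (Fin n) ℂ),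
      ∏ a, U (i a) (j a) = tpow p U i j := fun _ _ _ => rfl
    have hVU : ((V * U : Matrix.unitaryGroup (Fin n) ℂ) : Matrix (Fin n) (Fin n) ℂ) =
      (V : Matrix (Fin n) (Fin n) ℂ) * (U : Matrix (Fin n) (Fin n) ℂ) := rfl
    simp only [integrand, ← map_prod, e, tpow_star]
    rw [hVU, tpow_mul, Matrix.mul_apply, Matrix.mul_apply, map_sum, Finset.sum_mul_sum,
      Finset.sum_comm]
    simp only [map_mul]
    refine Finset.sum_congr rfl fun k' _ => Finset.sum_congr rfl fun k _ => ?_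
    ring
  rw [h1]
  simp only [h2]
  rw [integral_finsetSum _ fun k' _ => integrable_finsetSum _ fun k _ =>
    (integrable_integrand μ _ _ _ _).const_mul _]
  rw [Matrix.mul_apply]
  refine Finset.sum_congr rfl fun k' _ => ?_
  rw [integral_finsetSum _ fun k _ => (integrable_integrand μ _ _ _ _).const_mul _,
    Matrix.mul_apply, Finset.sum_mul]
  refine Finset.sum_congr rfl fun k _ => ?_
  rw [integral_const_mul, momentMat]
  ring

lemma moment_comm (hinv : ∀ V : Matrix.unitaryGroup (Fin n) ℂ, μ.map (fun W => V * W) = μ)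
    (j j' : Fin p → Fin n) : ∀ V ∈ Matrix.unitaryGroup (Fin n) ℂ,
    momentMat μ j j' * tpow p V = tpow p V * momentMat μ j j' := by
  intro V hV
  conv_lhs => rw [← moment_inv μ hinv j j' ⟨V, hV⟩]
  rw [mul_assoc, ← tpow_mul, Matrix.mem_unitaryGroup_iff'.1 hV, tpow_one, mul_one]

lemma moment_contract (j j' : Fin p → Fin n) (ρ : Equiv.Perm (Fin p)) :
    ∑ i : Fin p → Fin n, momentMat μ j j' i (i ∘ (ρ⁻¹ : Equiv.Perm (Fin p))) =
      if ∀ a, j a = j' (ρ a) then 1 else 0 := by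
  simp only [momentMat]
  rw [← integral_finsetSum _ fun k _ => integrable_integrand μ _ _ _ _]
  have : ∀ U, ∑ i : Fin p → Fin n, integrand i (i ∘ (ρ⁻¹ : Equiv.Perm (Fin p))) j j' U =
      if ∀ a, j a = j' (ρ a) then 1 else 0 := by
    intro U
    have h1 : ∀ i : Fin p → Fin n, integrand i (i ∘ (ρ⁻¹ : Equiv.Perm (Fin p))) j j' U =
        ∏ a, (starRingEnd ℂ) ((U : Matrix (Fin n) (Fin n) ℂ) (i a) (j' (ρ a))) *
          (U : Matrix (Fin n) (Fin n) ℂ) (i a) (j a) := by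
      intro i
      rw [integrand, Finset.prod_mul_distrib, mul_comm]
      congr 1
      rw [← Equiv.prod_comp ρ]
      simp
    simp only [h1]
    have h2 : ∀ x y, ∑ l, (starRingEnd ℂ) ((U : Matrix (Fin n) (Fin n) ℂ) l x) *
        (U : Matrix (Fin n) (Fin n) ℂ) l y = if x = y then 1 else 0 := by
      intro x y
      have := congrFun (congrFun (Matrix.mem_unitaryGroup_iff'.1 U.2) x) y
      rw [Matrix.mul_apply, Matrix.one_apply] at this
      simpa [Matrix.star_apply] using this
    have h3 := Finset.prod_univ_sum (fun _ : Fin p => (Finset.univ : Finset (Fin n)))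
      (fun a l => (starRingEnd ℂ) ((U : Matrix (Fin n) (Fin n) ℂ) l (j' (ρ a))) *
          (U : Matrix (Fin n) (Fin n) ℂ) l (j a))
    rw [Fintype.piFinset_univ] at h3
    rw [← h3]
    simp only [h2, Finset.prod_ite_zero, Finset.prod_const_one, Finset.mem_univ, true_imp_iff]
    simp only [eq_comm]
  simp only [this]
  simp

end integral

/-- **Weingarten formula.** For `n ≥ p ≥ 1`, a Haar-distributed unitary `U ∈ U(n)`
(`μ` is a left-invariant Borel probability measure on the unitary group) and the
Weingarten function `Wg` (characterized as the convolution inverse of `σ ↦ n^{#σ}`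
in the group algebra of `S_p`), the expectation of a product of `p` entries of `U`
and `p` conjugated entries of `U` is given by a sum over pairs of permutations. -/
theorem weingarten_formula (n p : ℕ) (hp : 1 ≤ p) (hpn : p ≤ n)
    (μ : Measure (Matrix.unitaryGroup (Fin n) ℂ)) [IsProbabilityMeasure μ]
    (hinv : ∀ V : Matrix.unitaryGroup (Fin n) ℂ, μ.map (fun W => V * W) = μ)
    (Wg : Equiv.Perm (Fin p) → ℝ)
    (hWg : ∀ σ : Equiv.Perm (Fin p),
      ∑ τ : Equiv.Perm (Fin p), Wg τ * (n : ℝ) ^ ncycles (σ * τ⁻¹) =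
        if σ = 1 then 1 else 0)
    (i i' j j' : Fin p → Fin n) :
    ∫ U, (∏ a, (U : Matrix (Fin n) (Fin n) ℂ) (i a) (j a)) *
        ∏ a, (starRingEnd ℂ) ((U : Matrix (Fin n) (Fin n) ℂ) (i' a) (j' a)) ∂μ =
      ∑ σ : Equiv.Perm (Fin p), ∑ τ : Equiv.Perm (Fin p),
        (if ∀ a, i a = i' (σ a) then (1 : ℂ) else 0) *
          (if ∀ a, j a = j' (τ a) then (1 : ℂ) else 0) *
          ((Wg (τ * σ⁻¹) : ℝ) : ℂ) := by
  obtain ⟨c, hc⟩ := mem_span (momentMat μ j j') hpn (moment_comm μ hinv j j')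
  have hδ : ∀ ρ : Equiv.Perm (Fin p), (if ∀ a, j a = j' (ρ a) then (1 : ℂ) else 0) =
      ∑ κ, c κ * (((n : ℝ) ^ ncycles (ρ⁻¹ * κ) : ℝ) : ℂ) := by
    intro ρ
    rw [← moment_contract μ j j' ρ]
    simp only [hc, Matrix.sum_apply, Matrix.smul_apply, smul_eq_mul]
    rw [Finset.sum_comm]
    refine Finset.sum_congr rfl fun κ _ => ?_
    rw [← Finset.mul_sum, ← fixed_count]
    congr 1
    refine Finset.sum_congr rfl fun k _ => ?_
    simp only [permOp, Function.comp, Equiv.Perm.mul_apply]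
    simp only [eq_comm]
  have hcσ : ∀ σ : Equiv.Perm (Fin p), c σ =
      ∑ τ : Equiv.Perm (Fin p), (if ∀ a, j a = j' (τ a) then (1 : ℂ) else 0) *
        ((Wg (τ * σ⁻¹) : ℝ) : ℂ) := by
    intro σ
    simp only [hδ, Finset.sum_mul]
    rw [Finset.sum_comm]
    have : ∀ κ : Equiv.Perm (Fin p), ∑ τ : Equiv.Perm (Fin p),
        c κ * (((n : ℝ) ^ ncycles (τ⁻¹ * κ) : ℝ) : ℂ) * ((Wg (τ * σ⁻¹) : ℝ) : ℂ) =
        c κ * if κ = σ then 1 else 0 := by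
      intro κ
      have h1 := hWg (κ * σ⁻¹)
      rw [← Equiv.sum_comp (Equiv.mulRight σ⁻¹)] at h1
      simp only [mul_inv_eq_one] at h1
      simp only [mul_assoc, ← Finset.mul_sum]
      congr 1
      have h2 : (if κ = σ then (1 : ℂ) else 0) = ((if κ = σ then (1 : ℝ) else 0 : ℝ) : ℂ) := by
        split_ifs <;> simp
      rw [h2, ← h1, Complex.ofReal_sum]
      refine Finset.sum_congr rfl fun τ _ => ?_
      rw [← Complex.ofReal_mul, mul_comm, ncycles_conj]
      simp [mul_assoc]
    rw [Finset.sum_congr rfl fun κ _ => this κ]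
    simp
  have h := congrFun (congrFun hc i) i'
  simp only [Matrix.sum_apply, Matrix.smul_apply, smul_eq_mul] at h
  refine Eq.trans h ?_
  refine Finset.sum_congr rfl fun σ _ => ?_
  rw [hcσ, Finset.sum_mul]
  refine Finset.sum_congr rfl fun τ _ => ?_
  rw [permOp]
  ring
end
end

section
/- Let d ≥ 1 and n ≥ d be integers. Then the Weingarten function evaluated at the full cycle (1,2,…,d) ∈ S_d satisfies Wg(n,(1,…,d)) = (−1)^{d−1} · c_{d−1} · Π_{j=−(d−1)}^{d−1} (n−j)^{−1}, where c_i = (2i)!/((i+1)!·i!) is the i-th Catalan number. -/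
open Matrix Filter

noncomputable section

open Equiv Equiv.Perm in
theorem ncycles_swap_mul {α : Type*} [Fintype α] [DecidableEq α] (q : Equiv.Perm α) (k : α)
    (hk : q k ≠ k) : ncycles (Equiv.swap k (q k) * q) = ncycles q + 1 := by
  have hmem : q.cycleOf k ∈ q.cycleFactorsFinset := by
    rw [cycleOf_mem_cycleFactorsFinset_iff]; simpa using hk
  have hdis := disjoint_mul_inv_of_mem_cycleFactorsFinset hmem
  set c := q.cycleOf k with hc
  have hck : c k = q k := by simp [hc]
  have hcyc : c.IsCycle := (mem_cycleFactorsFinset_iff.mp hmem).1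
  set r := q * c⁻¹ with hr
  have hq : q = c * r := by rw [hdis.symm.commute.eq, hr]; group
  have hle : ∀ p : Equiv.Perm α, p.cycleType.sum ≤ Fintype.card α := fun p => by
    rw [sum_cycleType]; exact Finset.card_le_univ _
  have h1 := hle q
  have h2 := hle (swap k (q k) * q)
  unfold ncycles
  have hqt : q.cycleType = c.cycleType + r.cycleType := by
    conv_lhs => rw [hq]
    exact hdis.symm.cycleType_mul
  by_cases h : c (c k) = k
  · have hsw : c = swap k (c k) := hcyc.eq_swap_of_apply_apply_eq_self (by rw [hck]; exact hk) h
    have e : swap k (q k) * q = r := by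
      rw [← hck]
      conv_lhs => rw [hq, hsw]
      simp [← mul_assoc, ← hsw]
      rw [hsw, Equiv.swap_mul_self]
    rw [e] at h2 ⊢
    rw [hqt] at h1 ⊢
    rw [hcyc.cycleType] at h1 ⊢
    have : c.support.card = 2 := by
      rw [hsw]; exact card_support_swap (by rw [hck]; exact hk.symm)
    simp [this] at h1 ⊢
    omega
  · have hcyc' := hcyc.swap_mul (x := k) (by rw [hck]; exact hk) h
    have hsup := support_swap_mul_eq c k h
    have hd' : Disjoint (swap k (c k) * c) r := by
      rw [disjoint_iff_disjoint_support, hsup]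
      exact Finset.disjoint_of_subset_left (Finset.sdiff_subset)
        (disjoint_iff_disjoint_support.mp hdis.symm)
    have e : swap k (q k) * q = (swap k (c k) * c) * r := by
      rw [← hck]
      conv_lhs => rw [hq]
      rw [mul_assoc]
    rw [e, hd'.cycleType_mul, hcyc'.cycleType, hsup] at h2 ⊢
    rw [hqt, hcyc.cycleType] at h1 ⊢
    have hks : k ∈ c.support := by rw [mem_support, hck]; exact hk
    have hcard : (c.support \ {k}).card + 1 = c.support.card := by
      rw [Finset.sdiff_singleton_eq_erase]; exact Finset.card_erase_add_one hks
    simp at h1 h2 ⊢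
    omega

section helpers
variable {α : Type*} [Fintype α] [DecidableEq α]

theorem ncycles_conj_s2 (g p : Equiv.Perm α) : ncycles (g * p * g⁻¹) = ncycles p := by
  unfold ncycles; rw [Equiv.Perm.cycleType_conj]

theorem ncycles_mul_comm (g p : Equiv.Perm α) : ncycles (g * p) = ncycles (p * g) := by
  have := ncycles_conj_s2 g (p * g)
  rw [← this]; congr 1; group

theorem ncycles_one : ncycles (1 : Equiv.Perm α) = Fintype.card α := by
  simp [ncycles]

theorem ncycles_add (p : Equiv.Perm α) (i k : α) (hp : p k = k) (hik : i ≠ k) :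
    ncycles (Equiv.swap i k * p) + 1 = ncycles p := by
  have hq : (Equiv.swap i k * p) k = i := by simp [hp]
  have := ncycles_swap_mul (Equiv.swap i k * p) k (by rw [hq]; exact hik)
  rw [hq, Equiv.swap_comm k i, ← mul_assoc, Equiv.swap_mul_self, one_mul] at this
  exact this.symm

/-- permutations supported on `A` -/
def SP (A : Finset α) : Finset (Equiv.Perm α) :=
  Finset.univ.filter (fun p => ∀ i, i ∉ A → p i = i)

theorem mem_SP {A : Finset α} {p : Equiv.Perm α} : p ∈ SP A ↔ ∀ i, i ∉ A → p i = i := by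
  simp [SP]

theorem SP_mul {A : Finset α} {p q : Equiv.Perm α} (hp : p ∈ SP A) (hq : q ∈ SP A) :
    p * q ∈ SP A := by
  rw [mem_SP] at *
  intro i hi
  rw [Equiv.Perm.mul_apply, hq i hi, hp i hi]

theorem SP_inv {A : Finset α} {p : Equiv.Perm α} (hp : p ∈ SP A) : p⁻¹ ∈ SP A := by
  rw [mem_SP] at *
  intro i hi
  rw [Equiv.Perm.inv_eq_iff_eq, hp i hi]

theorem SP_mono {A B : Finset α} (h : A ⊆ B) {p : Equiv.Perm α} (hp : p ∈ SP A) : p ∈ SP B := by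
  rw [mem_SP] at *
  exact fun i hi => hp i (fun h' => hi (h h'))

theorem SP_swap {A : Finset α} {i j : α} (hi : i ∈ A) (hj : j ∈ A) : Equiv.swap i j ∈ SP A := by
  rw [mem_SP]
  intro k hk
  exact Equiv.swap_apply_of_ne_of_ne (fun h => hk (h ▸ hi)) (fun h => hk (h ▸ hj))

theorem SP_map {A : Finset α} {p : Equiv.Perm α} (hp : p ∈ SP A) {i : α} (hi : i ∈ A) :
    p i ∈ A := by
  by_contra h
  have h1 := mem_SP.mp hp _ h
  have h2 : p i = i := p.injective h1
  exact h (h2.symm ▸ hi)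

theorem SP_singleton (x : α) : SP ({x} : Finset α) = {1} := by
  ext p
  rw [Finset.mem_singleton]
  constructor
  · intro hp
    ext i
    by_cases h : i = x
    · subst h
      simpa using SP_map hp (Finset.mem_singleton_self i)
    · exact mem_SP.mp hp i (by simpa using h)
  · rintro rfl
    simp [mem_SP]

theorem sum_SP_insert (A : Finset α) (k : α) (hk : k ∉ A) (g : Equiv.Perm α → ℝ) :
    ∑ p ∈ SP (insert k A), g p =
      ∑ p ∈ SP A, (g p + ∑ i ∈ A, g (Equiv.swap i k * p)) := by
  have h1 : ∀ p ∈ SP A, (g p + ∑ i ∈ A, g (Equiv.swap i k * p)) =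
      ∑ i ∈ insert k A, g (Equiv.swap i k * p) := by
    intro p _
    rw [Finset.sum_insert hk, Equiv.swap_self]
    rfl
  rw [Finset.sum_congr rfl h1, ← Finset.sum_product']
  symm
  refine Finset.sum_nbij' (fun x => Equiv.swap x.2 k * x.1)
    (fun p => (Equiv.swap (p k) k * p, p k)) ?_ ?_ ?_ ?_ ?_
  · rintro ⟨p, i⟩ h
    rw [Finset.mem_product] at h
    exact SP_mul (SP_swap h.2 (Finset.mem_insert_self _ _)) (SP_mono (Finset.subset_insert _ _) h.1)
  · intro p hp
    have hpk := SP_map hp (Finset.mem_insert_self k A)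
    rw [Finset.mem_product]
    refine ⟨?_, hpk⟩
    rw [mem_SP]
    intro i hi
    by_cases hik : i = k
    · subst hik; simp
    · exact mem_SP.mp (SP_mul (SP_swap hpk (Finset.mem_insert_self _ _)) hp) i (by simp [hi, hik])
  · rintro ⟨p, i⟩ h
    rw [Finset.mem_product] at h
    have hpk : p k = k := mem_SP.mp h.1 k hk
    simp [hpk, ← mul_assoc]
  · intro p hp
    simp [← mul_assoc]
  · intro p hp; rfl

theorem sum_SP_inv (A : Finset α) (g : Equiv.Perm α → ℝ) :
    ∑ p ∈ SP A, g p⁻¹ = ∑ p ∈ SP A, g p :=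
  Finset.sum_nbij' (fun p => p⁻¹) (fun p => p⁻¹) (fun _ h => SP_inv h) (fun _ h => SP_inv h)
    (fun _ _ => inv_inv _) (fun _ _ => inv_inv _) (fun _ _ => rfl)

theorem sum_SP_insert' (A : Finset α) (k : α) (hk : k ∉ A) (g : Equiv.Perm α → ℝ) :
    ∑ p ∈ SP (insert k A), g p =
      ∑ p ∈ SP A, (g p + ∑ i ∈ A, g (p * Equiv.swap i k)) := by
  rw [← sum_SP_inv, sum_SP_insert A k hk (fun p => g p⁻¹),
    ← sum_SP_inv A (fun p => (g p + ∑ i ∈ A, g (p * Equiv.swap i k)))]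
  simp

/-- signed double sum -/
def TT (A B : Finset α) (f : Equiv.Perm α → ℝ) : ℝ :=
  ∑ a ∈ SP A, ∑ b ∈ SP B, ((Equiv.Perm.sign a : ℤ) : ℝ) * f (a * b)

theorem TT_insert_left (A B : Finset α) (k : α) (hk : k ∉ A) (f : Equiv.Perm α → ℝ) :
    TT (insert k A) B f = TT A B f - TT A B (fun p => ∑ i ∈ A, f (Equiv.swap i k * p)) := by
  unfold TT
  rw [sum_SP_insert A k hk, ← Finset.sum_sub_distrib]
  refine Finset.sum_congr rfl fun a _ => ?_
  rw [sub_eq_add_neg, ← Finset.sum_neg_distrib]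
  congr 1
  rw [Finset.sum_comm]
  refine Finset.sum_congr rfl fun b _ => ?_
  rw [Finset.mul_sum, ← Finset.sum_neg_distrib]
  refine Finset.sum_congr rfl fun i hi => ?_
  have : i ≠ k := fun h => hk (h ▸ hi)
  simp [Equiv.Perm.sign_swap this, mul_assoc]

theorem TT_insert_right (A B : Finset α) (k : α) (hk : k ∉ B) (f : Equiv.Perm α → ℝ) :
    TT A (insert k B) f = TT A B f + TT A B (fun p => ∑ i ∈ B, f (p * Equiv.swap i k)) := by
  unfold TT
  rw [← Finset.sum_add_distrib]
  refine Finset.sum_congr rfl fun a _ => ?_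
  rw [sum_SP_insert' B k hk, ← Finset.sum_add_distrib]
  refine Finset.sum_congr rfl fun b _ => ?_
  congr 1
  rw [Finset.mul_sum]
  refine Finset.sum_congr rfl fun i hi => ?_
  rw [mul_assoc]

theorem TT_congr (A B : Finset α) (f g : Equiv.Perm α → ℝ)
    (h : ∀ p ∈ SP (A ∪ B), f p = g p) : TT A B f = TT A B g := by
  unfold TT
  refine Finset.sum_congr rfl fun a ha => Finset.sum_congr rfl fun b hb => ?_
  rw [h _ (SP_mul (SP_mono Finset.subset_union_left ha) (SP_mono Finset.subset_union_right hb))]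

theorem TT_smul (A B : Finset α) (f : Equiv.Perm α → ℝ) (c : ℝ) :
    TT A B (fun p => c * f p) = c * TT A B f := by
  unfold TT
  simp only [Finset.mul_sum]
  refine Finset.sum_congr rfl fun a _ => Finset.sum_congr rfl fun b _ => by ring

theorem TT_add (A B : Finset α) (f g : Equiv.Perm α → ℝ) :
    TT A B (fun p => f p + g p) = TT A B f + TT A B g := by
  unfold TT
  simp only [mul_add, Finset.sum_add_distrib]

theorem TT_ncycles_left (A B : Finset α) (k : α) (hA : k ∉ A) (hB : k ∉ B) (n : ℝ) (hn : n ≠ 0) :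
    TT (insert k A) B (fun p => n ^ ncycles p) =
      (1 - A.card / n) * TT A B (fun p => n ^ ncycles p) := by
  rw [TT_insert_left A B k hA, sub_mul, one_mul, ← TT_smul]
  congr 1
  apply TT_congr
  intro p hp
  have hpk : p k = k := mem_SP.mp hp k (by simp [hA, hB])
  have : ∀ i ∈ A, n ^ ncycles (Equiv.swap i k * p) = n ^ ncycles p / n := by
    intro i hi
    rw [← ncycles_add p i k hpk (fun h => hA (h ▸ hi)), pow_succ]
    field_simp
  rw [Finset.sum_congr rfl this, Finset.sum_const, nsmul_eq_mul]
  ring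

theorem TT_ncycles_right (A B : Finset α) (k : α) (hA : k ∉ A) (hB : k ∉ B) (n : ℝ) (hn : n ≠ 0) :
    TT A (insert k B) (fun p => n ^ ncycles p) =
      (1 + B.card / n) * TT A B (fun p => n ^ ncycles p) := by
  rw [TT_insert_right A B k hB, add_mul, one_mul, ← TT_smul]
  congr 1
  apply TT_congr
  intro p hp
  have hpk : p k = k := mem_SP.mp hp k (by simp [hA, hB])
  have : ∀ i ∈ B, n ^ ncycles (p * Equiv.swap i k) = n ^ ncycles p / n := by
    intro i hi
    rw [ncycles_mul_comm, ← ncycles_add p i k hpk (fun h => hB (h ▸ hi)), pow_succ]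
    field_simp
  rw [Finset.sum_congr rfl this, Finset.sum_const, nsmul_eq_mul]
  ring

theorem TT_singleton (x : α) (f : Equiv.Perm α → ℝ) : TT {x} {x} f = f 1 := by
  simp [TT, SP_singleton]

theorem TT_ncycles (x : α) (n : ℝ) (hn : n ≠ 0) (P : Finset α) :
    ∀ Q : Finset α, x ∉ P → x ∉ Q → Disjoint P Q →
    TT (insert x P) (insert x Q) (fun p => n ^ ncycles p) =
      n ^ Fintype.card α * (∏ j ∈ Finset.range P.card, (1 - (j + 1 : ℝ) / n)) *
        ∏ j ∈ Finset.range Q.card, (1 + (j + 1 : ℝ) / n) := by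
  induction P using Finset.induction_on with
  | empty =>
    intro Q
    induction Q using Finset.induction_on with
    | empty =>
      intro _ _ _
      have : insert x (∅ : Finset α) = {x} := rfl
      rw [this, TT_singleton, ncycles_one]; simp
    | insert k Q hk ih =>
      intro h1 h2 h3
      have hkx : k ≠ x := fun h => h2 (by simp [h])
      have hxQ : x ∉ Q := fun h => h2 (by simp [h])
      rw [Finset.insert_comm, TT_ncycles_right _ _ k (by simp [hkx]) (by simp [hkx, hk]) n hn,
        ih h1 hxQ (by simp), Finset.card_insert_of_notMem hk, Finset.card_insert_of_notMem hxQ,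
        Finset.prod_range_succ _ Q.card]
      push_cast
      ring
  | insert k P hk ih =>
    intro Q h1 h2 h3
    have hkx : k ≠ x := fun h => h1 (by simp [h])
    have hxP : x ∉ P := fun h => h1 (by simp [h])
    have hkQ : k ∉ Q := fun h => Finset.disjoint_left.mp h3 (Finset.mem_insert_self k P) h
    rw [Finset.insert_comm, TT_ncycles_left _ _ k (by simp [hkx, hk]) (by simp [hkx, hkQ]) n hn,
        ih Q hxP h2 (Finset.disjoint_of_subset_left (Finset.subset_insert _ _) h3),
        Finset.card_insert_of_notMem hk, Finset.card_insert_of_notMem hxP,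
        Finset.prod_range_succ _ P.card]
    push_cast
    ring

end helpers

section eigen
variable {α : Type*} [Fintype α] [DecidableEq α]

/-- twisted double sum -/
def HH (A B : Finset α) (f : Equiv.Perm α → ℝ) (s : Equiv.Perm α) : ℝ :=
  ∑ a ∈ SP A, ∑ b ∈ SP B, ((Equiv.Perm.sign a : ℤ) : ℝ) * f (a * s * b)

theorem HH_one (A B : Finset α) (f : Equiv.Perm α → ℝ) : HH A B f 1 = TT A B f := by
  simp [HH, TT]

theorem HH_left (A B : Finset α) (f : Equiv.Perm α → ℝ) (s a0 : Equiv.Perm α) (h : a0 ∈ SP A) :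
    HH A B f (a0 * s) = ((Equiv.Perm.sign a0 : ℤ) : ℝ) * HH A B f s := by
  unfold HH
  rw [Finset.mul_sum]
  refine Finset.sum_nbij' (fun a => a * a0) (fun a => a * a0⁻¹)
    (fun a ha => SP_mul ha h) (fun a ha => SP_mul ha (SP_inv h)) (by simp) (by simp) ?_
  intro a _
  rw [Finset.mul_sum]
  refine Finset.sum_congr rfl fun b _ => ?_
  have : ((Equiv.Perm.sign a0 : ℤ) : ℝ) * ((Equiv.Perm.sign a0 : ℤ) : ℝ) = 1 := by
    have := Int.units_mul_self (Equiv.Perm.sign a0)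
    rw [← Int.cast_mul, ← Units.val_mul, this]; simp
  simp only [Equiv.Perm.sign_mul, Units.val_mul, Int.cast_mul, mul_assoc]
  rw [mul_left_comm, ← mul_assoc ((Equiv.Perm.sign a0 : ℤ) : ℝ), this, one_mul]

theorem HH_right (A B : Finset α) (f : Equiv.Perm α → ℝ) (s b0 : Equiv.Perm α) (h : b0 ∈ SP B) :
    HH A B f (s * b0) = HH A B f s := by
  unfold HH
  refine Finset.sum_congr rfl fun a _ => ?_
  refine Finset.sum_nbij' (fun b => b0 * b) (fun b => b0⁻¹ * b)
    (fun a ha => SP_mul h ha) (fun a ha => SP_mul (SP_inv h) ha) (by simp) (by simp) ?_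
  intro b _
  simp only [mul_assoc]

theorem HH_zero (A B : Finset α) (f : Equiv.Perm α → ℝ) (s : Equiv.Perm α) (i j : α)
    (hij : i ≠ j) (hi : i ∈ B) (hj : j ∈ B) (hsi : s i ∈ A) (hsj : s j ∈ A) :
    HH A B f s = 0 := by
  have h1 := HH_right A B f s _ (SP_swap hi hj)
  have h2 := HH_left A B f s _ (SP_swap hsi hsj)
  have h3 : Equiv.swap (s i) (s j) * s = s * Equiv.swap i j := by
    rw [← Equiv.mul_swap_eq_swap_mul]
  rw [h3, h1, Equiv.Perm.sign_swap (fun h => hij (s.injective h))] at h2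
  simp at h2
  linarith

theorem factor (x : α) (A B : Finset α) (hAB : A ∩ B = {x}) (hU : A ∪ B = Finset.univ)
    (s : Equiv.Perm α) (hs : ∀ i j, i ∈ B → j ∈ B → s i ∈ A → s j ∈ A → i = j) :
    ∃ a ∈ SP A, ∃ b ∈ SP B, s = a * b := by
  have hxA : x ∈ A := (Finset.mem_inter.mp (hAB ▸ Finset.mem_singleton_self x)).1
  have hxB : x ∈ B := (Finset.mem_inter.mp (hAB ▸ Finset.mem_singleton_self x)).2
  have hor : ∀ y, y ∉ A → y ∈ B := fun y hy => by
    have := Finset.mem_univ y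
    rw [← hU, Finset.mem_union] at this
    tauto
  have hand : ∀ y, y ∈ A → y ∈ B → y = x := fun y h1 h2 => by
    have : y ∈ A ∩ B := Finset.mem_inter.mpr ⟨h1, h2⟩
    rw [hAB] at this
    simpa using this
  obtain ⟨i, hiB, hiA⟩ : ∃ i ∈ B, s i ∈ A := by
    by_contra hcon
    push Not at hcon
    have h1 : B.image s ⊆ B.erase x := by
      intro y hy
      obtain ⟨z, hz, rfl⟩ := Finset.mem_image.mp hy
      have := hcon z hz
      exact Finset.mem_erase.mpr ⟨fun h => this (h ▸ hxA), hor _ this⟩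
    have h2 := Finset.card_le_card h1
    rw [Finset.card_image_of_injective _ s.injective] at h2
    have := Finset.card_erase_lt_of_mem hxB
    omega
  set t : Equiv.Perm α := Equiv.swap x (s i) * s * Equiv.swap i x with ht
  have hmap : ∀ j, j ∉ A → t j ∉ A := by
    intro j hj
    have hjB := hor j hj
    have hjx : j ≠ x := fun h => hj (h ▸ hxA)
    have h1 : Equiv.swap i x j ∈ B := SP_map (SP_swap hiB hxB) hjB
    have h2 : Equiv.swap i x j ≠ i := by
      intro h
      apply hjx
      rw [Equiv.swap_apply_eq_iff] at h
      simpa using h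
    have h3 : s (Equiv.swap i x j) ∉ A := fun h => h2 (hs _ _ h1 hiB h hiA)
    have h4 : t j = s (Equiv.swap i x j) := by
      simp only [ht, Equiv.Perm.mul_apply]
      exact Equiv.swap_apply_of_ne_of_ne (fun h => h3 (by rw [h]; exact hxA))
        (fun h => h3 (by rw [h]; exact hiA))
    rw [h4]; exact h3
  have him : Aᶜ.image t = Aᶜ := by
    apply Finset.eq_of_subset_of_card_le
    · intro y hy
      obtain ⟨z, hz, rfl⟩ := Finset.mem_image.mp hy
      simp at hz ⊢
      exact hmap z hz
    · rw [Finset.card_image_of_injective _ t.injective]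
  have hiff : ∀ j, t j ∉ A ↔ j ∉ A := by
    intro j
    refine ⟨fun h => ?_, hmap j⟩
    have : t j ∈ Aᶜ.image t := by rw [him]; simpa using h
    obtain ⟨z, hz, hzj⟩ := Finset.mem_image.mp this
    rw [t.injective hzj] at hz
    simpa using hz
  set b : Equiv.Perm α := Equiv.Perm.ofSubtype (t.subtypePerm (p := fun j => j ∉ A) hiff) with hb
  have hb1 : ∀ j, j ∉ A → b j = t j := fun j hj => by
    exact Equiv.Perm.ofSubtype_apply_of_mem (p := fun j => j ∉ A) _ hj
  have hb2 : ∀ j, j ∈ A → b j = j := fun j hj => by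
    exact Equiv.Perm.ofSubtype_apply_of_not_mem (p := fun j => j ∉ A) _ (by simpa using hj)
  have hbB : b ∈ SP B := by
    rw [mem_SP]
    intro j hj
    apply hb2
    by_contra h
    exact hj (hor j h)
  have haA : t * b⁻¹ ∈ SP A := by
    rw [mem_SP]
    intro j hj
    have h0 : j ∈ Aᶜ.image t := by rw [him]; simpa using hj
    obtain ⟨z, hz, rfl⟩ := Finset.mem_image.mp h0
    have hz' : z ∉ A := by simpa using hz
    have h5 : b⁻¹ (t z) = z := by rw [Equiv.Perm.inv_eq_iff_eq, hb1 z hz']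
    rw [Equiv.Perm.mul_apply, h5]
  refine ⟨Equiv.swap x (s i) * (t * b⁻¹), SP_mul (SP_swap hxA hiA) haA,
    b * Equiv.swap i x, SP_mul hbB (SP_swap hiB hxB), ?_⟩
  rw [ht]
  ext y
  simp

theorem SP_inter (x : α) (A B : Finset α) (hAB : A ∩ B = {x}) (p : Equiv.Perm α)
    (h1 : p ∈ SP A) (h2 : p ∈ SP B) : p = 1 := by
  have : p ∈ SP ({x} : Finset α) := by
    rw [mem_SP] at *
    intro i hi
    rw [← hAB, Finset.mem_inter] at hi
    by_cases h : i ∈ A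
    · exact h2 i (fun h' => hi ⟨h, h'⟩)
    · exact h1 i h
  rw [SP_singleton] at this
  simpa using this

theorem TT_delta (x : α) (A B : Finset α) (hAB : A ∩ B = {x}) :
    TT A B (fun p => if p = 1 then 1 else 0) = 1 := by
  unfold TT
  have hone : ∀ C : Finset α, (1 : Equiv.Perm α) ∈ SP C := fun C => by simp [mem_SP]
  rw [Finset.sum_eq_single_of_mem 1 (hone A), Finset.sum_eq_single_of_mem 1 (hone B)]
  · simp
  · intro b _ hb
    simp [hb]
  · intro a ha hne
    apply Finset.sum_eq_zero
    intro b hb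
    beta_reduce
    rw [if_neg, mul_zero]
    intro h
    apply hne
    apply SP_inter x A B hAB a ha
    rw [mul_eq_one_iff_eq_inv] at h
    rw [h]; exact SP_inv hb

theorem HH_eigen (x : α) (A B : Finset α) (hAB : A ∩ B = {x}) (hU : A ∪ B = Finset.univ)
    (f : Equiv.Perm α → ℝ) (s : Equiv.Perm α) :
    HH A B f s = TT A B f * HH A B (fun p => if p = 1 then 1 else 0) s := by
  by_cases hs : ∀ i j, i ∈ B → j ∈ B → s i ∈ A → s j ∈ A → i = j
  · obtain ⟨a, ha, b, hb, rfl⟩ := factor x A B hAB hU s hs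
    have key : ∀ g : Equiv.Perm α → ℝ,
        HH A B g (a * b) = ((Equiv.Perm.sign a : ℤ) : ℝ) * TT A B g := by
      intro g
      rw [HH_right _ _ _ _ _ hb, ← HH_one, ← HH_left _ _ _ _ _ ha, mul_one]
    rw [key, key, TT_delta x A B hAB]
    ring
  · push Not at hs
    obtain ⟨i, j, hi, hj, hsi, hsj, hij⟩ := hs
    rw [HH_zero _ _ _ _ i j hij hi hj hsi hsj, HH_zero _ _ _ _ i j hij hi hj hsi hsj, mul_zero]

theorem Wg_class (G W : Equiv.Perm α → ℝ) (hG : ∀ g p, G (g * p) = G (p * g))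
    (hW : ∀ s, ∑ t, W t * G (s * t⁻¹) = if s = 1 then 1 else 0) (g p : Equiv.Perm α) :
    W (g * p) = W (p * g) := by
  let M : Matrix (Equiv.Perm α) (Equiv.Perm α) ℝ := Matrix.of fun s t => G (s * t⁻¹)
  let N : Matrix (Equiv.Perm α) (Equiv.Perm α) ℝ := Matrix.of fun t r => W (t * r⁻¹)
  have hMN : M * N = 1 := by
    ext s r
    rw [Matrix.mul_apply, Matrix.one_apply]
    have := hW (s * r⁻¹)
    simp only [mul_inv_eq_one] at this
    rw [← this]
    refine Fintype.sum_equiv (Equiv.mulRight r⁻¹) _ _ fun t => ?_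
    simp [M, N, mul_comm]
  have hNM : N * M = 1 := by rwa [mul_eq_one_comm] at hMN
  let N' : Matrix (Equiv.Perm α) (Equiv.Perm α) ℝ := Matrix.of fun t r => W (g * (t * r⁻¹) * g⁻¹)
  have hMN' : M * N' = 1 := by
    ext s r
    rw [Matrix.mul_apply, Matrix.one_apply]
    have := hW (g * (s * r⁻¹) * g⁻¹)
    simp only [mul_inv_eq_one, mul_eq_left] at this
    rw [← this]
    refine Fintype.sum_equiv ((Equiv.mulRight r⁻¹).trans (MulAut.conj g).toEquiv) _ _ fun t => ?_
    simp only [M, N', Matrix.of_apply, Equiv.trans_apply, Equiv.coe_mulRight]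
    have e : G (g * (s * r⁻¹) * g⁻¹ * ((MulAut.conj g).toEquiv (t * r⁻¹))⁻¹) = G (s * t⁻¹) := by
      have : g * (s * r⁻¹) * g⁻¹ * ((MulAut.conj g).toEquiv (t * r⁻¹))⁻¹ = g * (s * t⁻¹ * g⁻¹) := by
        simp [mul_assoc]
      rw [this, hG]; simp
    rw [e, mul_comm]
    simp
  have hNN : N = N' := by
    calc N = N * (M * N') := by rw [hMN', mul_one]
      _ = N' := by rw [← mul_assoc, hNM, one_mul]
  have := congrFun (congrFun hNN (p * g)) 1
  simp only [N, N', Matrix.of_apply] at this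
  simp [mul_assoc] at this
  exact this.symm

theorem Wg_TT (x : α) (A B : Finset α) (hAB : A ∩ B = {x}) (hU : A ∪ B = Finset.univ)
    (G W : Equiv.Perm α → ℝ) (hG : ∀ g p, G (g * p) = G (p * g))
    (hW : ∀ s, ∑ t, W t * G (s * t⁻¹) = if s = 1 then 1 else 0) :
    TT A B G * TT A B W = 1 := by
  have hc := Wg_class G W hG hW
  have h1 : ∑ t, W t * HH A B G t⁻¹ = 1 := by
    rw [← TT_delta x A B hAB]
    unfold HH TT
    simp only [Finset.mul_sum]
    rw [Finset.sum_comm]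
    refine Finset.sum_congr rfl fun a _ => ?_
    rw [Finset.sum_comm]
    refine Finset.sum_congr rfl fun b _ => ?_
    have h := hW (b * a)
    have e : (if a * b = 1 then (1:ℝ) else 0) = if b * a = 1 then 1 else 0 := by
      congr 1
      rw [mul_eq_one_iff_eq_inv, mul_eq_one_iff_eq_inv', eq_iff_iff]
    rw [e, ← h, Finset.mul_sum]
    refine Finset.sum_congr rfl fun t _ => ?_
    rw [hG (a * t⁻¹) b, mul_assoc b]
    ring
  have h2 : ∑ t, W t * HH A B (fun p => if p = 1 then 1 else 0) t⁻¹ = TT A B W := by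
    unfold HH TT
    simp only [Finset.mul_sum]
    rw [Finset.sum_comm]
    refine Finset.sum_congr rfl fun a _ => ?_
    rw [Finset.sum_comm]
    refine Finset.sum_congr rfl fun b _ => ?_
    rw [Finset.sum_eq_single (b * a)]
    · rw [hc b a]; simp; ring
    · intro t _ ht
      rw [if_neg]; · ring
      intro h
      apply ht
      have : t = b * (a * t⁻¹ * b) * b⁻¹ * t := by rw [h]; simp
      rw [this]; group
    · simp
  rw [← h1, ← h2, Finset.mul_sum]
  refine Finset.sum_congr rfl fun t _ => ?_
  rw [HH_eigen x A B hAB hU G]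
  ring

end eigen

section phi
variable {α : Type*} [Fintype α] [DecidableEq α]

/-- alternating sum over all hooks -/
def Phi (x : α) (V : Finset α) (f : Equiv.Perm α → ℝ) : ℝ :=
  ∑ P ∈ V.powerset, (-1 : ℝ) ^ P.card * TT (insert x P) (insert x (V \ P)) f

theorem Phi_insert (x k : α) (V : Finset α) (hx : x ∉ insert k V) (hk : k ∉ V)
    (f : Equiv.Perm α → ℝ)
    (hf : ∀ g ∈ SP (insert k V), ∀ p ∈ SP (insert x (insert k V)), f (g * p) = f (p * g)) :
    Phi x (insert k V) f =
      Phi x V (fun p => ∑ i ∈ insert x V, f (Equiv.swap i k * p) + f (p * Equiv.swap x k)) := by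
  have hkx : k ≠ x := fun h => hx (by simp [h])
  have hxV : x ∉ V := fun h => hx (by simp [h])
  unfold Phi
  rw [Finset.sum_powerset_insert hk, ← Finset.sum_add_distrib]
  refine Finset.sum_congr rfl fun P hP => ?_
  rw [Finset.mem_powerset] at hP
  have hkP : k ∉ P := fun h => hk (hP h)
  have hxP : x ∉ P := fun h => hxV (hP h)
  have e1 : insert k V \ P = insert k (V \ P) := by
    rw [Finset.insert_sdiff_of_notMem _ hkP]
  have e2 : insert k V \ insert k P = V \ P := by
    ext y; simp only [Finset.mem_sdiff, Finset.mem_insert]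
    constructor
    · tauto
    · rintro ⟨h1, h2⟩
      refine ⟨Or.inr h1, ?_⟩
      rintro (h | h)
      · exact hk (h ▸ h1)
      · exact h2 h
  rw [e1, e2, Finset.insert_comm x k, Finset.insert_comm x k,
    TT_insert_right _ _ k (by simp [hkx, hk]), TT_insert_left _ _ k (by simp [hkx, hkP]),
    Finset.card_insert_of_notMem hkP, pow_succ]
  have e3 : TT (insert x P) (insert x (V \ P))
      (fun p => ∑ i ∈ insert x V, f (Equiv.swap i k * p) + f (p * Equiv.swap x k)) =
      TT (insert x P) (insert x (V \ P)) (fun p => ∑ i ∈ insert x (V \ P), f (p * Equiv.swap i k)) +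
      TT (insert x P) (insert x (V \ P)) (fun p => ∑ i ∈ insert x P, f (Equiv.swap i k * p)) := by
    rw [← TT_add]
    apply TT_congr
    intro p hp
    have hp' : p ∈ SP (insert x (insert k V)) := by
      refine SP_mono ?_ hp
      intro y
      simp only [Finset.mem_union, Finset.mem_insert, Finset.mem_sdiff]
      rintro ((h | h) | (h | h))
      · exact Or.inl h
      · exact Or.inr (Or.inr (hP h))
      · exact Or.inl h
      · exact Or.inr (Or.inr h.1)
    have h1 : ∑ i ∈ V \ P, f (p * Equiv.swap i k) = ∑ i ∈ V \ P, f (Equiv.swap i k * p) := by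
      refine Finset.sum_congr rfl fun i hi => ?_
      rw [hf _ (SP_swap (by simp [(Finset.mem_sdiff.mp hi).1]) (by simp)) p hp']
    rw [Finset.sum_insert hxV, Finset.sum_insert hxP, Finset.sum_insert (by simp [hxV]), h1,
      ← Finset.sum_sdiff hP]
    ring
  rw [e3]
  ring

theorem Phi_eval (x : α) (V : Finset α) : x ∉ V → ∀ (f : Equiv.Perm α → ℝ) (v : ℝ),
    (∀ g ∈ SP V, ∀ p ∈ SP (insert x V), f (g * p) = f (p * g)) →
    (∀ p ∈ SP (insert x V), ncycles p + V.card = Fintype.card α → f p = v) →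
    Phi x V f = ((V.card + 1).factorial : ℝ) * v := by
  induction V using Finset.induction_on with
  | empty =>
    intro _ f v _ hv
    have := hv 1 (by simp [mem_SP]) (by simp [ncycles_one])
    simp [Phi, TT_singleton, this]
  | insert k V hk ih =>
    intro hx f v hf hv
    have hkx : k ≠ x := fun h => hx (by simp [h])
    have hxV : x ∉ V := fun h => hx (by simp [h])
    rw [Phi_insert x k V hx hk f hf, ih hxV _ ((V.card + 2 : ℕ) * v) ?_ ?_,
      Finset.card_insert_of_notMem hk, Nat.factorial_succ (V.card + 1)]
    · push_cast; ring
    · intro g hg p hp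
      have hgk : g k = k := mem_SP.mp hg k hk
      have hgx : g x = x := mem_SP.mp hg x hxV
      have hg1 : g ∈ SP (insert k V) := SP_mono (Finset.subset_insert _ _) hg
      have hg2 : g ∈ SP (insert x V) := SP_mono (Finset.subset_insert _ _) hg
      have hpp : p ∈ SP (insert x (insert k V)) :=
        SP_mono (Finset.insert_subset_insert _ (Finset.subset_insert _ _)) hp
      have hsw : ∀ i ∈ insert x V, Equiv.swap i k ∈ SP (insert x (insert k V)) := by
        intro i hi
        refine SP_swap ?_ (by simp)
        simp only [Finset.mem_insert] at hi ⊢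
        tauto
      congr 1
      · have h1 : ∀ i ∈ insert x V, f (Equiv.swap i k * (p * g)) =
            f (Equiv.swap (g i) k * (g * p)) := by
          intro i hi
          rw [← mul_assoc, ← hf g hg1 _ (SP_mul (hsw i hi) hpp), ← mul_assoc, ← mul_assoc,
            Equiv.mul_swap_eq_swap_mul, hgk]
        rw [Finset.sum_congr rfl h1]
        symm
        refine Finset.sum_nbij' (fun i => g i) (fun i => g⁻¹ i) (fun i hi => SP_map hg2 hi)
          (fun i hi => SP_map (SP_inv hg2) hi) (by simp) (by simp) (fun i hi => rfl)
      · rw [mul_assoc, hf g hg1 _ (SP_mul hpp (hsw x (by simp))), mul_assoc, mul_assoc,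
          Equiv.mul_swap_eq_swap_mul, hgk, hgx]
    · intro p hp hc
      have hpk : p k = k := mem_SP.mp hp k (by simp [hkx, hk])
      have hpp : p ∈ SP (insert x (insert k V)) :=
        SP_mono (Finset.insert_subset_insert _ (Finset.subset_insert _ _)) hp
      have hsw : ∀ i ∈ insert x V, Equiv.swap i k ∈ SP (insert x (insert k V)) := by
        intro i hi
        refine SP_swap ?_ (by simp)
        simp only [Finset.mem_insert] at hi ⊢
        tauto
      have hne : ∀ i ∈ insert x V, i ≠ k := by
        rintro i hi rfl
        simp [hkx, hk] at hi
      have hnc : ∀ i ∈ insert x V, ncycles (Equiv.swap i k * p) + (insert k V).card =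
          Fintype.card α := by
        intro i hi
        have := ncycles_add p i k hpk (hne i hi)
        rw [Finset.card_insert_of_notMem hk]
        omega
      have h1 : ∀ i ∈ insert x V, f (Equiv.swap i k * p) = v := fun i hi =>
        hv _ (SP_mul (hsw i hi) hpp) (hnc i hi)
      have h2 : f (p * Equiv.swap x k) = v :=
        hv _ (SP_mul hpp (hsw x (by simp))) (by rw [ncycles_mul_comm]; exact hnc x (by simp))
      rw [Finset.sum_congr rfl h1, h2, Finset.sum_const, Finset.card_insert_of_notMem hxV,
        nsmul_eq_mul]
      push_cast; ring

end phi

theorem conj_finRotate (d : ℕ) (hd : 1 ≤ d) (p : Equiv.Perm (Fin d)) (h : ncycles p = 1) :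
    IsConj (finRotate d) p := by
  rw [Equiv.Perm.isConj_iff_cycleType_eq]
  unfold ncycles at h
  have hle : p.cycleType.sum ≤ d := by
    rw [Equiv.Perm.sum_cycleType]; simpa using Finset.card_le_univ p.support
  rw [Fintype.card_fin] at h
  by_cases h0 : p.cycleType = 0
  · rw [h0] at h
    simp at h
    subst h
    rw [h0, Equiv.Perm.cycleType_eq_zero]
    exact Subsingleton.elim _ _
  · have hpos : 0 < p.cycleType.card := Multiset.card_pos.mpr h0
    have h1 : p.cycleType.card = 1 := by omega
    obtain ⟨m, hm⟩ := Multiset.card_eq_one.mp h1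
    have hm2 : 2 ≤ m := Equiv.Perm.two_le_of_mem_cycleType (σ := p) (by simp [hm])
    rw [hm] at h hle ⊢
    simp at h hle
    have : m = d := by omega
    subst this
    exact _root_.cycleType_finRotate_of_le hm2

/-- eigenvalue on hook `r` -/
def qq (m r : ℕ) (n : ℝ) : ℝ :=
  n ^ (m + 1) * (∏ j ∈ Finset.range r, (1 - (j + 1 : ℝ) / n)) *
        ∏ j ∈ Finset.range (m - r), (1 + (j + 1 : ℝ) / n)

theorem Wg_sum (m n : ℕ) (hmn : m + 1 ≤ n)
    (Wg : Equiv.Perm (Fin (m + 1)) → ℝ)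
    (hWg : ∀ σ : Equiv.Perm (Fin (m + 1)),
      ∑ τ : Equiv.Perm (Fin (m + 1)), Wg τ * (n : ℝ) ^ ncycles (σ * τ⁻¹) =
        if σ = 1 then 1 else 0) :
    ((m + 1).factorial : ℝ) * Wg (finRotate (m + 1)) =
      ∑ r ∈ Finset.range (m + 1), (-1 : ℝ) ^ r * (m.choose r) * (qq m r n)⁻¹ := by
  have hn : (n : ℝ) ≠ 0 := by
    have : n ≠ 0 := by omega
    exact_mod_cast this
  have hG : ∀ g p : Equiv.Perm (Fin (m + 1)), (n : ℝ) ^ ncycles (g * p) = (n : ℝ) ^ ncycles (p * g) :=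
    fun g p => by rw [ncycles_mul_comm]
  have hc := Wg_class (fun p => (n : ℝ) ^ ncycles p) Wg hG hWg
  set V : Finset (Fin (m + 1)) := Finset.univ.erase 0 with hV
  have h0V : (0 : Fin (m + 1)) ∉ V := by simp [hV]
  have hcard : V.card = m := by simp [hV]
  have h1 := Phi_eval 0 V h0V Wg (Wg (finRotate (m + 1))) (fun g _ p _ => hc g p) (by
    intro p _ hp
    rw [hcard, Fintype.card_fin] at hp
    obtain ⟨c, hcc⟩ := isConj_iff.mp (conj_finRotate (m + 1) (by omega) p (by omega))
    rw [← hcc, hc]; simp)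
  rw [hcard] at h1
  rw [← h1]
  unfold Phi
  have h2 : ∀ P ∈ V.powerset, (-1 : ℝ) ^ P.card * TT (insert 0 P) (insert 0 (V \ P)) Wg =
      (fun r => (-1 : ℝ) ^ r * (qq m r n)⁻¹) P.card := by
    intro P hP
    rw [Finset.mem_powerset] at hP
    have h0P : (0 : Fin (m + 1)) ∉ P := fun h => h0V (hP h)
    have hi : insert 0 P ∩ insert 0 (V \ P) = {0} := by
      ext y; simp only [Finset.mem_inter, Finset.mem_insert, Finset.mem_sdiff,
        Finset.mem_singleton]; tauto
    have hu : insert 0 P ∪ insert 0 (V \ P) = Finset.univ := by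
      ext y; simp only [Finset.mem_union, Finset.mem_insert, Finset.mem_sdiff,
        Finset.mem_univ, hV, Finset.mem_erase]; tauto
    have h3 := Wg_TT 0 _ _ hi hu (fun p => (n : ℝ) ^ ncycles p) Wg hG hWg
    rw [TT_ncycles 0 n hn P (V \ P) h0P (by simp [h0V]) Finset.disjoint_sdiff,
      Finset.card_sdiff_of_subset hP, hcard, Fintype.card_fin] at h3
    beta_reduce
    rw [eq_inv_of_mul_eq_one_right h3]
    rfl
  rw [Finset.sum_congr rfl h2,
    Finset.sum_powerset_apply_card (fun r => (-1 : ℝ) ^ r * (qq m r n)⁻¹), hcard]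
  refine Finset.sum_congr rfl fun r _ => ?_
  rw [nsmul_eq_mul]; ring

theorem dp_smeval (k : ℕ) (y : ℝ) :
    (descPochhammer ℤ k).smeval y = ∏ j ∈ Finset.range k, (y - j) := by
  induction k with
  | zero => simp
  | succ k ih =>
    rw [descPochhammer_succ_right, Polynomial.smeval_mul, ih, Finset.prod_range_succ,
      Polynomial.smeval_sub, Polynomial.smeval_X, Polynomial.smeval_natCast]
    simp

theorem prod_split (a : ℕ → ℝ) (r s : ℕ) :
    ∏ j ∈ Finset.range (r + s), a j =
      (∏ j ∈ Finset.range r, a j) * ∏ j ∈ Finset.range s, a (r + s - 1 - j) := by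
  rw [Finset.prod_range_add, ← Finset.prod_range_reflect (fun x => a (r + x))]
  congr 1
  refine Finset.prod_congr rfl fun j hj => ?_
  rw [Finset.mem_range] at hj
  congr 1
  omega

theorem D_eq (m : ℕ) (n : ℝ) :
    ∏ j ∈ Finset.Icc (-(m : ℤ)) (m : ℤ), (n - (j : ℝ)) =
      n * (∏ j ∈ Finset.range m, (n - (j + 1 : ℝ))) * ∏ j ∈ Finset.range m, (n + (j + 1 : ℝ)) := by
  induction m with
  | zero => simp
  | succ m ih =>
    have : Finset.Icc (-((m + 1 : ℕ) : ℤ)) ((m + 1 : ℕ) : ℤ) =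
        insert (-((m : ℤ) + 1)) (insert ((m : ℤ) + 1) (Finset.Icc (-(m : ℤ)) (m : ℤ))) := by
      ext y
      simp only [Finset.mem_Icc, Finset.mem_insert]
      push_cast
      omega
    rw [this, Finset.prod_insert (by simp only [Finset.mem_Icc, Finset.mem_insert]; omega),
      Finset.prod_insert (by simp only [Finset.mem_Icc]; omega), ih,
      Finset.prod_range_succ, Finset.prod_range_succ]
    push_cast
    ring

theorem qq_eq (r s : ℕ) (n : ℝ) (hn : n ≠ 0) :
    qq (r + s) r n = n * (∏ j ∈ Finset.range r, (n - (j + 1 : ℝ))) *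
      ∏ j ∈ Finset.range s, (n + (j + 1 : ℝ)) := by
  unfold qq
  have h1 : ∏ j ∈ Finset.range r, (n - (j + 1 : ℝ)) =
      n ^ r * ∏ j ∈ Finset.range r, (1 - (j + 1 : ℝ) / n) := by
    rw [← Finset.card_range r, ← Finset.prod_const, Finset.card_range, ← Finset.prod_mul_distrib]
    refine Finset.prod_congr rfl fun j _ => by field_simp
  have h2 : ∏ j ∈ Finset.range s, (n + (j + 1 : ℝ)) =
      n ^ s * ∏ j ∈ Finset.range s, (1 + (j + 1 : ℝ) / n) := by
    rw [← Finset.card_range s, ← Finset.prod_const, Finset.card_range, ← Finset.prod_mul_distrib]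
    refine Finset.prod_congr rfl fun j _ => by field_simp
  rw [h1, h2, Nat.add_sub_cancel_left]
  ring

theorem final_sum (m n : ℕ) (hmn : m + 1 ≤ n) :
    ∑ r ∈ Finset.range (m + 1), (-1 : ℝ) ^ r * (m.choose r) * (qq m r n)⁻¹ =
      ((m + 1).factorial : ℝ) * ((-1 : ℝ) ^ m * (catalan m) *
        ∏ j ∈ Finset.Icc (-(m : ℤ)) (m : ℤ), ((n : ℝ) - (j : ℝ))⁻¹) := by
  have hn : (n : ℝ) ≠ 0 := by
    have : n ≠ 0 := by omega
    exact_mod_cast this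
  have hP : ∀ r ≤ m, ∏ j ∈ Finset.range r, ((n : ℝ) - (j + 1 : ℝ)) ≠ 0 := by
    intro r hr
    rw [Finset.prod_ne_zero_iff]
    intro j hj
    rw [Finset.mem_range] at hj
    have : ((j + 1 : ℕ) : ℝ) < n := by exact_mod_cast (by omega : j + 1 < n)
    push_cast at this
    linarith
  have hQ : ∀ r, ∏ j ∈ Finset.range r, ((n : ℝ) + (j + 1 : ℝ)) ≠ 0 := by
    intro r
    rw [Finset.prod_ne_zero_iff]
    intro j hj
    positivity
  set D := ∏ j ∈ Finset.Icc (-(m : ℤ)) (m : ℤ), ((n : ℝ) - (j : ℝ)) with hD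
  have hDe := D_eq m n
  rw [← hD] at hDe
  have hD0 : D ≠ 0 := by
    rw [hDe]; exact mul_ne_zero (mul_ne_zero hn (hP m le_rfl)) (hQ m)
  rw [Finset.prod_inv_distrib, ← hD]
  have hterm : ∀ ij ∈ Finset.HasAntidiagonal.antidiagonal m, (-1 : ℝ) ^ ij.1 * (m.choose ij.1) * (qq m ij.1 n)⁻¹ =
      (-1 : ℝ) ^ m * D⁻¹ * (Nat.choose m ij.1 * ((descPochhammer ℤ ij.1).smeval ((n : ℝ) + m) *
        (descPochhammer ℤ ij.2).smeval ((m : ℝ) - n))) := by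
    rintro ⟨r, s⟩ h
    rw [Finset.HasAntidiagonal.mem_antidiagonal] at h
    simp only at h ⊢
    have hq0 : qq m r n ≠ 0 := by
      rw [← h, qq_eq _ _ _ hn]
      exact mul_ne_zero (mul_ne_zero hn (hP r (by omega))) (hQ s)
    have e1 : ∏ j ∈ Finset.range m, ((n : ℝ) - (j + 1 : ℝ)) =
        (∏ j ∈ Finset.range r, ((n : ℝ) - (j + 1 : ℝ))) *
          ((-1) ^ s * (descPochhammer ℤ s).smeval ((m : ℝ) - n)) := by
      rw [dp_smeval, ← h, prod_split, ← Finset.card_range s, ← Finset.prod_const,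
        Finset.card_range, ← Finset.prod_mul_distrib]
      congr 1
      refine Finset.prod_congr rfl fun j hj => ?_
      rw [Finset.mem_range] at hj
      rw [Nat.sub_sub, Nat.cast_sub (by omega)]
      push_cast; ring
    have e2 : ∏ j ∈ Finset.range m, ((n : ℝ) + (j + 1 : ℝ)) =
        (∏ j ∈ Finset.range s, ((n : ℝ) + (j + 1 : ℝ))) *
          (descPochhammer ℤ r).smeval ((n : ℝ) + m) := by
      rw [dp_smeval, ← h, add_comm r s, prod_split]
      congr 1
      refine Finset.prod_congr rfl fun j hj => ?_
      rw [Finset.mem_range] at hj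
      rw [Nat.sub_sub, Nat.cast_sub (by omega)]
      push_cast; ring
    have e3 : D = qq m r n * ((-1) ^ s * (descPochhammer ℤ s).smeval ((m : ℝ) - n)) *
        (descPochhammer ℤ r).smeval ((n : ℝ) + m) := by
      rw [hDe, e1, e2]
      conv_rhs => rw [← h, qq_eq _ _ _ hn, h]
      ring
    have e4 : (qq m r n)⁻¹ = D⁻¹ * ((-1) ^ s * (descPochhammer ℤ s).smeval ((m : ℝ) - n)) *
        (descPochhammer ℤ r).smeval ((n : ℝ) + m) := by
      apply inv_eq_of_mul_eq_one_right
      calc _ = D⁻¹ * (qq m r n * ((-1) ^ s * (descPochhammer ℤ s).smeval ((m : ℝ) - n)) *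
        (descPochhammer ℤ r).smeval ((n : ℝ) + m)) := by ring
        _ = 1 := by rw [← e3, inv_mul_cancel₀ hD0]
    rw [e4, ← h, pow_add]
    ring
  rw [← Finset.Nat.sum_antidiagonal_eq_sum_range_succ_mk
    (fun ij : ℕ × ℕ => (-1 : ℝ) ^ ij.1 * (m.choose ij.1) * (qq m ij.1 n)⁻¹),
    Finset.sum_congr rfl hterm, ← Finset.mul_sum,
    ← Ring.descPochhammer_smeval_add m (Commute.all _ _)]
  have e5 : (n : ℝ) + m + (m - n) = ((2 * m : ℕ) : ℝ) := by push_cast; ring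
  have e6 : (descPochhammer ℤ m).smeval ((n : ℝ) + m + (m - n)) =
      ((m + 1).factorial : ℝ) * catalan m := by
    rw [e5, Polynomial.descPochhammer_smeval_eq_descFactorial, Nat.descFactorial_eq_factorial_mul_choose,
      Nat.factorial_succ]
    have := succ_mul_catalan_eq_centralBinom m
    rw [Nat.centralBinom] at this
    rw [← this]; push_cast; ring
  rw [e6]
  ring

/-- **Value of the Weingarten function at a full cycle.** For `n ≥ d ≥ 1` and the
Weingarten function `Wg(n,·)` on `S_d` (characterized as the convolution inverse of
`σ ↦ n^{#σ}`), its value at the full cycle `(1,2,…,d)` is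
`(−1)^{d−1} c_{d−1} ∏_{j=−(d−1)}^{d−1} (n−j)⁻¹`, where `c_i` is the `i`-th Catalan number. -/
theorem weingarten_full_cycle (d n : ℕ) (hd : 1 ≤ d) (hdn : d ≤ n)
    (Wg : Equiv.Perm (Fin d) → ℝ)
    (hWg : ∀ σ : Equiv.Perm (Fin d),
      ∑ τ : Equiv.Perm (Fin d), Wg τ * (n : ℝ) ^ ncycles (σ * τ⁻¹) =
        if σ = 1 then 1 else 0) :
    Wg (finRotate d) =
      (-1 : ℝ) ^ (d - 1) * (catalan (d - 1)) *
        ∏ j ∈ Finset.Icc (-(d : ℤ) + 1) ((d : ℤ) - 1), ((n : ℝ) - (j : ℝ))⁻¹ := by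
  obtain ⟨m, rfl⟩ : ∃ m, d = m + 1 := ⟨d - 1, by omega⟩
  have h1 := Wg_sum m n hdn Wg hWg
  rw [final_sum m n hdn] at h1
  have hf : ((m + 1).factorial : ℝ) ≠ 0 := by exact_mod_cast (Nat.factorial_ne_zero _)
  have h2 := mul_left_cancel₀ hf h1
  rw [h2]
  have e1 : -((m + 1 : ℕ) : ℤ) + 1 = -(m : ℤ) := by push_cast; ring
  have e2 : ((m + 1 : ℕ) : ℤ) - 1 = (m : ℤ) := by push_cast; ring
  rw [e1, e2, Nat.add_sub_cancel]
end
end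

section
/- Fix an integer p ≥ 1 and a permutation σ ∈ S_p whose cycles (fixed points included) have lengths d_1,…,d_r. Then lim_{n→∞} n^{p+|σ|} · Wg(n,σ) = Π_{i=1}^{r} (−1)^{d_i−1} c_{d_i−1}, where c_i = (2i)!/((i+1)!·i!) is the i-th Catalan number; in particular Wg(n,σ) = n^{−(p+|σ|)}(Mob(σ) + O(n^{−2})) where Mob(σ) denotes this product of signed Catalan numbers. -/
open Matrix Filter Asymptotics

noncomputable section

/-- length of a permutation: `|σ| = p − #σ`, the minimal number of transpositions -/
def permLength {α : Type*} [Fintype α] [DecidableEq α] (σ : Equiv.Perm α) : ℕ :=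
  σ.cycleType.sum - σ.cycleType.card

/-- the Moebius function `Mob(σ)`: product over the cycles of `σ`, of lengths
`d_1,…,d_r`, of the signed Catalan numbers `(−1)^{d_i−1} c_{d_i−1}`
(fixed points contribute a factor `1`). -/
def Mob {α : Type*} [Fintype α] [DecidableEq α] (σ : Equiv.Perm α) : ℝ :=
  (σ.cycleType.map fun d => (-1 : ℝ) ^ (d - 1) * (catalan (d - 1))).prod

open Equiv Equiv.Perm

/-- cycle type of a cyclic permutation on `k` points (empty if `k ≤ 1`) -/
def ctf (k : ℕ) : Multiset ℕ := if 2 ≤ k then {k} else 0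

lemma wg_formPerm_split {α : Type*} [DecidableEq α] (x i : α) (l₁ l₂ : List α)
    (h : (x :: l₁ ++ i :: l₂).Nodup) :
    swap x i * (x :: l₁ ++ i :: l₂).formPerm = (x :: l₁).formPerm * (i :: l₂).formPerm := by
  induction l₁ generalizing x with
  | nil => simp
  | cons y l ih =>
    have h2 : (y :: l ++ i :: l₂).Nodup := by
      simp only [List.cons_append, List.nodup_cons] at h ⊢
      exact h.2
    have hxy : x ≠ y := by
      rintro rfl
      simp at h
    have hxi : x ≠ i := by
      rintro rfl
      simp at h
    have hyi : y ≠ i := by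
      rintro rfl
      simp at h
    have ih' := ih y h2
    simp only [List.cons_append, List.formPerm_cons_cons] at ih' ⊢
    have key : swap x i * swap x y = swap x y * swap y i := by
      ext z
      simp only [Perm.mul_apply, Equiv.swap_apply_def]
      split_ifs <;> simp_all
    rw [← mul_assoc, key, mul_assoc, ih', mul_assoc]

lemma wg_cycleType_formPerm {α : Type*} [Fintype α] [DecidableEq α] (l : List α) (h : l.Nodup) :
    l.formPerm.cycleType = ctf l.length := by
  unfold ctf
  split_ifs with h2
  · rw [(List.isCycle_formPerm h h2).cycleType, List.support_formPerm_of_nodup l h]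
    · rw [List.toFinset_card_of_nodup h]
    · rintro x rfl
      simp at h2
  · rw [Equiv.Perm.cycleType_eq_zero, List.formPerm_eq_one_iff _ h]
    omega

lemma wg_split {α : Type*} [Fintype α] [DecidableEq α] (π : Perm α) (x : α) (hx : π x ≠ x) :
    ∃ r : Multiset ℕ, π.cycleType = {(cycleOf π x).support.card} + r ∧
      ∀ k, 1 ≤ k → k < (cycleOf π x).support.card →
        (swap x ((π ^ k) x) * π).cycleType = ctf k + ctf ((cycleOf π x).support.card - k) + r := by
  set c := cycleOf π x with hc
  have hcm : c ∈ π.cycleFactorsFinset := by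
    rw [hc, cycleOf_mem_cycleFactorsFinset_iff]
    simpa using hx
  have hdis := (disjoint_mul_inv_of_mem_cycleFactorsFinset hcm).symm
  have hπ : π = c * (π * c⁻¹) := by
    rw [hdis.commute.eq]; simp
  set r := π * c⁻¹ with hr
  have hcyc : c.IsCycle := isCycle_cycleOf π hx
  refine ⟨r.cycleType, ?_, ?_⟩
  · conv_lhs => rw [hπ]
    rw [hdis.cycleType_mul, hcyc.cycleType]
  · intro k hk1 hk2
    set L := toList π x with hL
    have hlen : L.length = c.support.card := length_toList π x
    have hnd : L.Nodup := nodup_toList π x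
    have hLc : L.formPerm = c := formPerm_toList π x
    have hkL : k < L.length := by omega
    have hsplit : L = L.take k ++ L.drop k := (List.take_append_drop k L).symm
    have hd : L.drop k = (π ^ k) x :: L.drop (k + 1) := by
      rw [List.drop_eq_getElem_cons hkL, getElem_toList]
    have ht : ∃ l, L.take k = x :: l := by
      have h0 : L = x :: L.drop 1 := by
        conv_lhs => rw [← List.drop_zero (l := L)]
        rw [List.drop_eq_getElem_cons (by omega), getElem_toList]; simp
      obtain ⟨m, rfl⟩ : ∃ m, k = m + 1 := ⟨k - 1, by omega⟩
      refine ⟨(L.drop 1).take m, ?_⟩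
      conv_lhs => rw [h0]
      simp
    obtain ⟨l, hl⟩ := ht
    have e : swap x ((π ^ k) x) * c = (L.take k).formPerm * (L.drop k).formPerm := by
      rw [← hLc, hl, hd, ← wg_formPerm_split]
      · rw [← hl, ← hd, ← hsplit]
      · rw [← hl, ← hd, ← hsplit]; exact hnd
    have hndt : (L.take k).Nodup := hnd.sublist (List.take_sublist k L)
    have hndd : (L.drop k).Nodup := hnd.sublist (List.drop_sublist k L)
    have hdl : List.Disjoint (L.take k) (L.drop k) := by
      rw [hsplit] at hnd
      exact List.disjoint_of_nodup_append hnd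
    have hLr : ∀ y ∈ L, r y = y := by
      intro y hy
      have : y ∈ c.support := by
        rw [hL, mem_toList_iff] at hy
        rw [hc, mem_support_cycleOf_iff]
        exact hy
      rcases hdis y with h | h
      · simp [h] at this
      · exact h
    have d1 : Perm.Disjoint (L.take k).formPerm (L.drop k).formPerm := by
      intro y
      by_cases hy : y ∈ L.take k
      · right; exact List.formPerm_apply_of_notMem (fun h => hdl hy h)
      · left; exact List.formPerm_apply_of_notMem hy
    have d2 : Perm.Disjoint ((L.take k).formPerm * (L.drop k).formPerm) r := by
      intro y
      by_cases hy : y ∈ L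
      · right; exact hLr y hy
      · left
        rw [Perm.mul_apply, List.formPerm_apply_of_notMem (fun h => hy (List.mem_of_mem_drop h)),
          List.formPerm_apply_of_notMem (fun h => hy (List.mem_of_mem_take h))]
    have e2 : swap x ((π ^ k) x) * π = (L.take k).formPerm * (L.drop k).formPerm * r := by
      rw [← e, mul_assoc, ← hπ]
    rw [e2, d2.cycleType_mul, d1.cycleType_mul, wg_cycleType_formPerm _ hndt,
      wg_cycleType_formPerm _ hndd, List.length_take, List.length_drop, hlen,
      min_eq_left (by omega)]

lemma wg_sum_ge {α : Type*} [Fintype α] [DecidableEq α] (π : Perm α) :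
    π.cycleType.card ≤ π.cycleType.sum := by
  have : π.cycleType.card • 1 ≤ π.cycleType.sum :=
    Multiset.card_nsmul_le_sum fun d hd => (one_lt_of_mem_cycleType hd).le
  simpa using this

lemma wg_len_add {α : Type*} [Fintype α] [DecidableEq α] (π : Perm α) :
    permLength π + π.cycleType.card = π.cycleType.sum := by
  have := wg_sum_ge π
  unfold permLength; omega

lemma wg_ctf (k : ℕ) (hk : 1 ≤ k) : (ctf k).sum + 1 = (ctf k).card + k := by
  unfold ctf
  split_ifs with h
  · simp; omega
  · simp; omega

lemma wg_same_pow {α : Type*} [Fintype α] [DecidableEq α] (π : Perm α) (x i : α) (hxi : x ≠ i)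
    (h : π.SameCycle x i) : π x ≠ x ∧ ∃ k, 1 ≤ k ∧ k < (cycleOf π x).support.card ∧
      (π ^ k) x = i := by
  have hx : π x ≠ x := by
    intro hx
    exact hxi (h.eq_of_left hx)
  obtain ⟨k, hk, hk'⟩ := h.exists_pow_eq_of_mem_support (by simpa using hx)
  refine ⟨hx, k, ?_, hk, hk'⟩
  rcases Nat.eq_zero_or_pos k with rfl | h
  · simp at hk'; exact absurd hk' hxi
  · exact h

lemma wg_len_same {α : Type*} [Fintype α] [DecidableEq α] (π : Perm α) (x i : α) (hxi : x ≠ i)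
    (h : π.SameCycle x i) : permLength (swap x i * π) + 1 = permLength π := by
  obtain ⟨hx, k, hk1, hk2, rfl⟩ := wg_same_pow π x i hxi h
  obtain ⟨r, hr1, hr2⟩ := wg_split π x hx
  have h3 := hr2 k hk1 hk2
  have a1 := wg_len_add π
  have a2 := wg_len_add (swap x ((π ^ k) x) * π)
  have a3 := wg_ctf k hk1
  have a4 := wg_ctf ((cycleOf π x).support.card - k) (by omega)
  rw [hr1] at a1
  rw [h3] at a2
  simp only [Multiset.card_add, Multiset.sum_add, Multiset.card_singleton,
    Multiset.sum_singleton] at a1 a2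
  omega

lemma wg_same_of_not {α : Type*} [Fintype α] [DecidableEq α] (π : Perm α) (x i : α)
    (h : ¬ π.SameCycle x i) : (swap x i * π).SameCycle x i := by
  by_contra h'
  have key : ∀ k : ℕ, ((swap x i * π) ^ k) x = (π ^ k) x := by
    intro k
    induction k with
    | zero => simp
    | succ k ih =>
      have e : ((swap x i * π) ^ (k + 1)) x = swap x i ((π ^ (k + 1)) x) := by
        rw [pow_succ', Perm.mul_apply, ih, Perm.mul_apply, pow_succ', Perm.mul_apply]
      have n1 : (π ^ (k + 1)) x ≠ i := fun hh => h ⟨(k + 1 : ℕ), by rw [zpow_natCast]; exact hh⟩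
      have n2 : (π ^ (k + 1)) x ≠ x := fun hh => h' ⟨(k + 1 : ℕ), by
        rw [zpow_natCast, e, hh, swap_apply_left]⟩
      rw [e, swap_apply_of_ne_of_ne n2 n1]
  have hpos := orderOf_pos π
  apply h'
  refine ⟨(orderOf π : ℕ), ?_⟩
  obtain ⟨m, hm⟩ : ∃ m, orderOf π = m + 1 := ⟨orderOf π - 1, by omega⟩
  rw [zpow_natCast, hm, pow_succ', Perm.mul_apply, key, Perm.mul_apply, ← Perm.mul_apply π,
    ← pow_succ', ← hm, pow_orderOf_eq_one]
  simp

lemma wg_len_not_same {α : Type*} [Fintype α] [DecidableEq α] (π : Perm α) (x i : α)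
    (hxi : x ≠ i)
    (h : ¬ π.SameCycle x i) : permLength (swap x i * π) = permLength π + 1 := by
  have := wg_len_same (swap x i * π) x i hxi (wg_same_of_not π x i h)
  rw [← mul_assoc, Equiv.swap_mul_self, one_mul] at this
  exact this.symm

lemma wg_len_inv {α : Type*} [Fintype α] [DecidableEq α] (π : Perm α) :
    permLength π⁻¹ = permLength π := by
  unfold permLength; rw [cycleType_inv]

lemma wg_len_swap_le {α : Type*} [Fintype α] [DecidableEq α] (π : Perm α) (x i : α)
    (hxi : x ≠ i) : permLength (swap x i * π) ≤ permLength π + 1 := by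
  by_cases h : π.SameCycle x i
  · have := wg_len_same π x i hxi h; omega
  · exact (wg_len_not_same π x i hxi h).le

lemma wg_len_one {α : Type*} [Fintype α] [DecidableEq α] : permLength (1 : Perm α) = 0 := by
  simp [permLength]

lemma wg_exists_moved {α : Type*} (a : Perm α) (ha : a ≠ 1) : ∃ x, a x ≠ x := by
  by_contra! h
  exact ha (Equiv.ext h)

lemma wg_len_pos {α : Type*} [Fintype α] [DecidableEq α] (a : Perm α) (ha : a ≠ 1) :
    0 < permLength a := by
  obtain ⟨x, hx⟩ := wg_exists_moved a ha
  have := wg_len_same a x (a x) hx.symm ⟨1, by simp⟩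
  omega

lemma wg_len_mul_le {α : Type*} [Fintype α] [DecidableEq α] (a b : Perm α) :
    permLength (a * b) ≤ permLength a + permLength b := by
  induction hn : permLength a generalizing a with
  | zero =>
    have : a = 1 := by
      by_contra h
      have := wg_len_pos a h; omega
    subst this; simp
  | succ n ih =>
    have ha : a ≠ 1 := by
      rintro rfl
      rw [wg_len_one] at hn; omega
    obtain ⟨x, hx⟩ := wg_exists_moved a ha
    have h1 := wg_len_same a x (a x) hx.symm ⟨1, by simp⟩
    have h2 := ih (swap x (a x) * a) (by omega)
    have h3 := wg_len_swap_le (swap x (a x) * a * b) x (a x) hx.symm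
    rw [← mul_assoc, ← mul_assoc, Equiv.swap_mul_self, one_mul] at h3
    omega

lemma wg_sign {α : Type*} [Fintype α] [DecidableEq α] (a : Perm α) :
    sign a = (-1) ^ permLength a := by
  rw [sign_of_cycleType, ← wg_len_add a, add_assoc, pow_add, ← two_mul, pow_mul]
  simp

lemma wg_parity {α : Type*} [Fintype α] [DecidableEq α] (a b : Perm α) :
    Even (permLength (a * b) + (permLength a + permLength b)) := by
  have h : sign (a * b) * (sign a * sign b) = 1 := by
    rw [Perm.sign_mul]
    exact Int.units_mul_self _
  rw [wg_sign, wg_sign, wg_sign, ← pow_add, ← pow_add] at h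
  by_contra hc
  rw [Nat.not_even_iff_odd] at hc
  rw [hc.neg_one_pow] at h
  exact absurd h (by decide)

lemma wg_ncycles {α : Type*} [Fintype α] [DecidableEq α] (a : Perm α) :
    ncycles a + permLength a = Fintype.card α := by
  have := wg_len_add a
  have := sum_cycleType_le a
  unfold ncycles; omega

/-- signed Catalan number attached to a cycle of length `d` -/
def mm (d : ℕ) : ℝ := (-1 : ℝ) ^ (d - 1) * (catalan (d - 1))

lemma wg_mm_ctf (k : ℕ) (hk : 1 ≤ k) : ((ctf k).map mm).prod = mm k := by
  unfold ctf
  split_ifs with h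
  · simp
  · obtain rfl : k = 1 := by omega
    simp [mm]

lemma wg_mm_rec (d : ℕ) (hd : 2 ≤ d) :
    ∑ k ∈ Finset.Ico 1 d, mm k * mm (d - k) = - mm d := by
  obtain ⟨n, rfl⟩ : ∃ n, d = n + 2 := ⟨d - 2, by omega⟩
  rw [Finset.sum_Ico_eq_sum_range]
  have h : mm (n + 2) = (-1 : ℝ) ^ (n + 1) *
      ∑ j ∈ Finset.range (n + 1), (catalan j : ℝ) * catalan (n - j) := by
    unfold mm
    rw [show n + 2 - 1 = n + 1 by omega, catalan_succ,
      ← Finset.sum_range (fun j => catalan j * catalan (n - j))]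
    push_cast
    rfl
  rw [h, Finset.mul_sum, ← Finset.sum_neg_distrib]
  refine Finset.sum_congr (by simp) ?_
  intro j hj
  have hj' : j ≤ n := by simp at hj; omega
  unfold mm
  rw [show 1 + j - 1 = j by omega, show n + 2 - (1 + j) - 1 = n - j by omega]
  have : (-1 : ℝ) ^ n = (-1) ^ j * (-1) ^ (n - j) := by
    rw [← pow_add]; congr 1; omega
  rw [pow_succ, this]
  ring

lemma wg_Mob_eq {α : Type*} [Fintype α] [DecidableEq α] (σ : Perm α) :
    Mob σ = (σ.cycleType.map mm).prod := rfl

open Classical in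
lemma wg_Mob_rec {α : Type*} [Fintype α] [DecidableEq α] (π : Perm α) (x : α) (hx : π x ≠ x) :
    Mob π + ∑ i ∈ Finset.univ.filter (fun i => x ≠ i ∧ π.SameCycle x i), Mob (swap x i * π)
      = 0 := by
  obtain ⟨r, hr1, hr2⟩ := wg_split π x hx
  set d := (cycleOf π x).support.card with hd
  have hd2 : 2 ≤ d := by
    have := two_le_length_toList_iff_mem_support.2 (mem_support.2 hx)
    rwa [length_toList] at this
  have hinj : ∀ a b, a < d → b < d → (π ^ a) x = (π ^ b) x → a = b := by
    intro a b ha hb hab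
    rw [hd, ← length_toList] at ha hb
    rw [← getElem_toList π x a ha, ← getElem_toList π x b hb] at hab
    exact (nodup_toList π x).getElem_inj_iff.1 hab
  have e : ∑ i ∈ Finset.univ.filter (fun i => x ≠ i ∧ π.SameCycle x i), Mob (swap x i * π)
      = ∑ k ∈ Finset.Ico 1 d, Mob (swap x ((π ^ k) x) * π) := by
    symm
    refine Finset.sum_bij (fun k _ => (π ^ k) x) ?_ ?_ ?_ ?_
    · intro k hk
      rw [Finset.mem_Ico] at hk
      simp only [Finset.mem_filter, Finset.mem_univ, true_and]
      refine ⟨fun h => ?_, ⟨k, by simp⟩⟩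
      have := hinj 0 k (by omega) hk.2 (by simpa using h)
      omega
    · intro a ha b hb hab
      rw [Finset.mem_Ico] at ha hb
      exact hinj a b ha.2 hb.2 hab
    · intro i hi
      simp only [Finset.mem_filter, Finset.mem_univ, true_and] at hi
      obtain ⟨_, k, h1, h2, h3⟩ := wg_same_pow π x i hi.1 hi.2
      exact ⟨k, Finset.mem_Ico.2 ⟨h1, h2⟩, h3⟩
    · intros; rfl
  have e2 : ∀ k ∈ Finset.Ico 1 d, Mob (swap x ((π ^ k) x) * π)
      = mm k * mm (d - k) * (r.map mm).prod := by
    intro k hk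
    rw [Finset.mem_Ico] at hk
    rw [wg_Mob_eq, hr2 k hk.1 hk.2, Multiset.map_add, Multiset.map_add, Multiset.prod_add,
      Multiset.prod_add, wg_mm_ctf k hk.1, wg_mm_ctf (d - k) (by omega)]
  rw [e, Finset.sum_congr rfl e2, ← Finset.sum_mul, wg_mm_rec d hd2, wg_Mob_eq, hr1,
    Multiset.map_add, Multiset.prod_add]
  simp

lemma wg_len_mul_swap {α : Type*} [Fintype α] [DecidableEq α] (g : Perm α) (x i : α) :
    permLength (g * swap x i) = permLength (swap x i * g⁻¹) := by
  rw [← wg_len_inv (g * swap x i), _root_.mul_inv_rev, Equiv.swap_inv]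

open Classical in
lemma wg_Mob_sum {α : Type*} [Fintype α] [DecidableEq α] (ρ : Perm α) (hρ : ρ ≠ 1) :
    ∑ τ : Perm α, (if permLength τ + permLength (ρ * τ⁻¹) = permLength ρ then Mob τ else 0)
      = 0 := by
  obtain ⟨x, hx⟩ := wg_exists_moved ρ hρ
  rw [← Finset.sum_filter]
  set G := Finset.univ.filter
    (fun τ : Perm α => permLength τ + permLength (ρ * τ⁻¹) = permLength ρ) with hG
  have memG : ∀ τ, τ ∈ G ↔ permLength τ + permLength (ρ * τ⁻¹) = permLength ρ := by
    intro τ; simp [hG]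
  rw [← Finset.sum_filter_add_sum_filter_not G (fun τ => (ρ * τ⁻¹) x = x)]
  have e : ∑ τ ∈ G.filter (fun τ => ¬ (ρ * τ⁻¹) x = x), Mob τ =
      ∑ π ∈ G.filter (fun τ => (ρ * τ⁻¹) x = x),
        ∑ i ∈ Finset.univ.filter (fun i => x ≠ i ∧ π.SameCycle x i), Mob (swap x i * π) := by
    rw [Finset.sum_sigma']
    symm
    refine Finset.sum_bij' (fun q _ => swap x q.2 * q.1)
      (fun τ _ => ⟨swap x ((τ * ρ⁻¹) x) * τ, (τ * ρ⁻¹) x⟩) ?_ ?_ ?_ ?_ ?_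
    · rintro ⟨π, i⟩ h
      simp only [Finset.mem_sigma, Finset.mem_filter, memG, Finset.mem_univ, true_and] at h ⊢
      obtain ⟨⟨h1, h2⟩, h3, h4⟩ := h
      have l1 := wg_len_same π x i h3 h4
      have e1 : ρ * (swap x i * π)⁻¹ = ρ * π⁻¹ * swap x i := by
        rw [_root_.mul_inv_rev, Equiv.swap_inv, mul_assoc]
      have ns : ¬ (ρ * π⁻¹)⁻¹.SameCycle x i := by
        rw [sameCycle_inv]
        intro hh
        exact h3 (hh.eq_of_left h2)
      have l2 := wg_len_not_same _ x i h3 ns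
      rw [← wg_len_mul_swap, wg_len_inv] at l2
      rw [e1]
      refine ⟨by omega, ?_⟩
      rw [Perm.mul_apply, swap_apply_left]
      intro hh
      exact h3 ((ρ * π⁻¹).injective (h2.trans hh.symm))
    · intro τ h
      simp only [Finset.mem_sigma, Finset.mem_filter, memG, Finset.mem_univ, true_and] at h ⊢
      obtain ⟨h1, h2⟩ := h
      set i := (τ * ρ⁻¹) x with hi
      have gi : (ρ * τ⁻¹) i = x := by simp [hi]
      have gx : (ρ * τ⁻¹)⁻¹ x = i := by simp [hi]
      have h3 : x ≠ i := by
        intro hh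
        rw [← hh] at gi
        exact h2 gi
      have e1 : ρ * (swap x i * τ)⁻¹ = ρ * τ⁻¹ * swap x i := by
        rw [_root_.mul_inv_rev, Equiv.swap_inv, mul_assoc]
      have sc : (ρ * τ⁻¹)⁻¹.SameCycle x i := ⟨1, by rw [zpow_one]; exact gx⟩
      have l1 := wg_len_same _ x i h3 sc
      rw [← wg_len_mul_swap, wg_len_inv] at l1
      have l2 := wg_len_swap_le τ x i h3
      have l3 := wg_len_mul_le (ρ * τ⁻¹ * swap x i) (swap x i * τ)
      rw [show ρ * τ⁻¹ * swap x i * (swap x i * τ) = ρ by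
        rw [mul_assoc, ← mul_assoc (swap x i), Equiv.swap_mul_self]; simp] at l3
      rw [e1]
      refine ⟨⟨by omega, ?_⟩, h3, ?_⟩
      · rw [Perm.mul_apply, swap_apply_left, gi]
      · by_contra hc
        have := wg_len_not_same _ x i h3 hc
        rw [← mul_assoc, Equiv.swap_mul_self, one_mul] at this
        omega
    · rintro ⟨π, i⟩ h
      simp only [Finset.mem_sigma, Finset.mem_filter, memG, Finset.mem_univ, true_and] at h
      obtain ⟨⟨h1, h2⟩, h3, h4⟩ := h
      have e0 : (π * ρ⁻¹) x = x := by
        have : (ρ * π⁻¹)⁻¹ x = x := by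
          rw [Perm.inv_eq_iff_eq]; exact h2.symm
        simpa using this
      have e1 : (swap x i * π * ρ⁻¹) x = i := by
        rw [mul_assoc, Perm.mul_apply, e0, swap_apply_left]
      simp only [e1]
      rw [← mul_assoc, Equiv.swap_mul_self, one_mul]
    · intro τ h
      simp only []
      rw [← mul_assoc, Equiv.swap_mul_self, one_mul]
    · intros; rfl
  rw [e, ← Finset.sum_add_distrib]
  refine Finset.sum_eq_zero ?_
  intro π hπ
  simp only [Finset.mem_filter] at hπ
  refine wg_Mob_rec π x ?_
  intro hh
  apply hx
  have := hπ.2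
  rw [Perm.mul_apply] at this
  rwa [Perm.inv_eq_iff_eq.2 hh.symm] at this

/-- leading order operator -/
def A0 (p : ℕ) : (Perm (Fin p) → ℝ) →ₗ[ℝ] (Perm (Fin p) → ℝ) where
  toFun v := fun ρ => ∑ τ : Perm (Fin p),
    if permLength τ + permLength (ρ * τ⁻¹) = permLength ρ then v τ else 0
  map_add' v w := by
    ext ρ
    simp only [Pi.add_apply, ← Finset.sum_add_distrib]
    refine Finset.sum_congr rfl fun τ _ => ?_
    split_ifs <;> simp
  map_smul' c v := by
    ext ρ
    simp [Finset.mul_sum]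

lemma A0_apply (p : ℕ) (v : Perm (Fin p) → ℝ) (ρ : Perm (Fin p)) :
    A0 p v ρ = ∑ τ : Perm (Fin p),
      if permLength τ + permLength (ρ * τ⁻¹) = permLength ρ then v τ else 0 := rfl

lemma A0_ker (p : ℕ) : LinearMap.ker (A0 p) = ⊥ := by
  rw [LinearMap.ker_eq_bot']
  intro v hv
  have key : ∀ n, ∀ ρ, permLength ρ = n → v ρ = 0 := by
    intro n
    induction n using Nat.strong_induction_on with
    | _ n ih =>
      intro ρ hρ
      have h := congrFun hv ρ
      rw [A0_apply, Finset.sum_eq_single ρ] at h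
      · simpa [wg_len_one] using h
      · intro τ _ hτ
        split_ifs with hg
        · have : 0 < permLength (ρ * τ⁻¹) := by
            apply wg_len_pos
            intro hh
            exact hτ (mul_inv_eq_one.1 hh).symm
          exact ih _ (by omega) τ rfl
        · rfl
      · simp
  ext ρ
  exact key _ ρ rfl

lemma A0_Mob (p : ℕ) (ρ : Perm (Fin p)) : A0 p Mob ρ = if ρ = 1 then 1 else 0 := by
  split_ifs with h
  · subst h
    rw [A0_apply, Finset.sum_eq_single 1]
    · simp [wg_len_one, Mob]
    · intro τ _ hτ
      have := wg_len_pos τ hτ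
      rw [if_neg]
      rw [wg_len_one]; omega
    · simp
  · rw [A0_apply]
    exact wg_Mob_sum ρ h

lemma wg_bound (p : ℕ) (hp : 1 ≤ p) (n : ℕ) (hn : p ≤ n) (W : Perm (Fin p) → ℝ)
    (hW : ∀ ρ : Perm (Fin p), ∑ τ : Perm (Fin p), W τ * (n : ℝ) ^ ncycles (ρ * τ⁻¹) =
        if ρ = 1 then 1 else 0) (e : Perm (Fin p) → ℝ)
    (he : e = fun τ => (n : ℝ) ^ (p + permLength τ) * W τ - Mob τ) :
    ‖A0 p e‖ ≤ Fintype.card (Perm (Fin p)) * (‖(Mob : Perm (Fin p) → ℝ)‖ + ‖e‖) *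
      ((n : ℝ) ^ 2)⁻¹ := by
  have hn1 : (1 : ℝ) ≤ n := by exact_mod_cast hp.trans hn
  have hn0 : (0 : ℝ) < n := by linarith
  set f : Perm (Fin p) → ℝ := fun τ => (n : ℝ) ^ (p + permLength τ) * W τ with hf
  have hef : e = f - Mob := he
  have hfb : ∀ τ, |f τ| ≤ ‖(Mob : Perm (Fin p) → ℝ)‖ + ‖e‖ := by
    intro τ
    have : f = Mob + e := by rw [hef]; simp
    calc |f τ| = ‖f τ‖ := rfl
      _ ≤ ‖f‖ := norm_le_pi_norm f τ
      _ ≤ _ := by rw [this]; exact norm_add_le _ _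
  rw [pi_norm_le_iff_of_nonneg (by positivity)]
  intro ρ
  have hδ : A0 p Mob ρ = ∑ τ : Perm (Fin p), (n : ℝ) ^ permLength ρ *
      (W τ * (n : ℝ) ^ ncycles (ρ * τ⁻¹)) := by
    rw [← Finset.mul_sum, hW, A0_Mob]
    split_ifs with h
    · subst h; simp [wg_len_one]
    · simp
  rw [hef, map_sub, Pi.sub_apply, hδ, A0_apply, ← Finset.sum_sub_distrib]
  refine (norm_sum_le _ _).trans ?_
  rw [← hef]
  have : ∀ τ ∈ (Finset.univ : Finset (Perm (Fin p))),
      ‖(if permLength τ + permLength (ρ * τ⁻¹) = permLength ρ then f τ else 0) -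
        (n : ℝ) ^ permLength ρ * (W τ * (n : ℝ) ^ ncycles (ρ * τ⁻¹))‖ ≤
      (‖(Mob : Perm (Fin p) → ℝ)‖ + ‖e‖) * ((n : ℝ) ^ 2)⁻¹ := by
    intro τ _
    have hnc := wg_ncycles (ρ * τ⁻¹)
    rw [Fintype.card_fin] at hnc
    have htri := wg_len_mul_le (ρ * τ⁻¹) τ
    have hpar := wg_parity (ρ * τ⁻¹) τ
    rw [inv_mul_cancel_right] at htri hpar
    split_ifs with hg
    · have : f τ = (n : ℝ) ^ permLength ρ * (W τ * (n : ℝ) ^ ncycles (ρ * τ⁻¹)) := by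
        simp only [hf]
        rw [show p + permLength τ = permLength ρ + ncycles (ρ * τ⁻¹) by omega, pow_add]
        ring
      rw [this, sub_self, norm_zero]
      positivity
    · obtain ⟨s, hs⟩ : ∃ s, permLength (ρ * τ⁻¹) + permLength τ = permLength ρ + 2 + s := by
        obtain ⟨c, hc⟩ := hpar
        exact ⟨permLength (ρ * τ⁻¹) + permLength τ - (permLength ρ + 2), by omega⟩
      have e1 : f τ = (n : ℝ) ^ 2 * (n : ℝ) ^ s *
          ((n : ℝ) ^ permLength ρ * (W τ * (n : ℝ) ^ ncycles (ρ * τ⁻¹))) := by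
        simp only [hf]
        rw [show p + permLength τ = 2 + s + permLength ρ + ncycles (ρ * τ⁻¹) by omega,
          pow_add, pow_add, pow_add]
        ring
      set y := (n : ℝ) ^ permLength ρ * (W τ * (n : ℝ) ^ ncycles (ρ * τ⁻¹)) with hy
      have h1 : (1 : ℝ) ≤ (n : ℝ) ^ s := one_le_pow₀ hn1
      rw [zero_sub, norm_neg, Real.norm_eq_abs, ← div_eq_mul_inv, le_div_iff₀ (by positivity)]
      refine le_trans ?_ (hfb τ)
      rw [e1, abs_mul (_ * _) y, abs_of_nonneg (show (0:ℝ) ≤ (n : ℝ) ^ 2 * (n : ℝ) ^ s by positivity)]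
      have h2 : (0:ℝ) ≤ |y| * (n : ℝ) ^ 2 := by positivity
      nlinarith
  refine (Finset.sum_le_card_nsmul _ _ _ this).trans (le_of_eq ?_)
  rw [nsmul_eq_mul, Finset.card_univ]
  ring

/-- **First-order asymptotics of the Weingarten function.** For a fixed `p ≥ 1` and
`σ ∈ S_p`, with `Wg(n,·)` the Weingarten function (convolution inverse of `σ ↦ n^{#σ}`
for `n ≥ p`), one has `n^{p+|σ|} Wg(n,σ) → Mob(σ)`; in particular
`n^{p+|σ|} Wg(n,σ) − Mob(σ) = O(n^{−2})`. -/
theorem weingarten_asymptotics (p : ℕ) (hp : 1 ≤ p) (σ : Equiv.Perm (Fin p))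
    (Wg : ℕ → Equiv.Perm (Fin p) → ℝ)
    (hWg : ∀ n, p ≤ n → ∀ ρ : Equiv.Perm (Fin p),
      ∑ τ : Equiv.Perm (Fin p), Wg n τ * (n : ℝ) ^ ncycles (ρ * τ⁻¹) =
        if ρ = 1 then 1 else 0) :
    Tendsto (fun n : ℕ => (n : ℝ) ^ (p + permLength σ) * Wg n σ) atTop (nhds (Mob σ)) ∧
      (fun n : ℕ => (n : ℝ) ^ (p + permLength σ) * Wg n σ - Mob σ) =O[atTop]
        fun n : ℕ => ((n : ℝ) ^ 2)⁻¹ := by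
  have hO : (fun n : ℕ => (n : ℝ) ^ (p + permLength σ) * Wg n σ - Mob σ) =O[atTop]
      fun n : ℕ => ((n : ℝ) ^ 2)⁻¹ := by
    obtain ⟨K, _, hK⟩ := LinearMap.exists_antilipschitzWith (A0 p) (A0_ker p)
    set N : ℝ := ((Fintype.card (Equiv.Perm (Fin p)) : ℕ) : ℝ) with hN
    set M : ℝ := ‖(Mob : Equiv.Perm (Fin p) → ℝ)‖ with hM
    have hsq : Tendsto (fun n : ℕ => (n : ℝ) ^ 2) atTop atTop :=
      (tendsto_pow_atTop two_ne_zero).comp tendsto_natCast_atTop_atTop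
    refine IsBigO.of_bound (2 * (K * N * M)) ?_
    filter_upwards [eventually_ge_atTop p, hsq.eventually_ge_atTop (2 * (K * N))] with n hn hn2
    have hn0 : (0 : ℝ) < n := by exact_mod_cast lt_of_lt_of_le hp hn
    set e : Equiv.Perm (Fin p) → ℝ :=
      fun τ => (n : ℝ) ^ (p + permLength τ) * Wg n τ - Mob τ with he
    have hb := wg_bound p hp n hn (Wg n) (hWg n hn) e he
    have hk : ‖e‖ ≤ K * ‖A0 p e‖ := by
      have := hK.le_mul_dist e 0
      simpa using this
    have hK0 : (0 : ℝ) ≤ K := K.2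
    have hN0 : (0 : ℝ) ≤ N := by positivity
    have hM0 : (0 : ℝ) ≤ M := norm_nonneg _
    have hn3 : (0 : ℝ) < (n : ℝ) ^ 2 := by positivity
    have h1 : ‖e‖ ≤ K * (N * (M + ‖e‖) * ((n : ℝ) ^ 2)⁻¹) :=
      hk.trans (mul_le_mul_of_nonneg_left hb hK0)
    have h2 : ‖e‖ * (n : ℝ) ^ 2 ≤ K * N * (M + ‖e‖) := by
      rw [← le_div_iff₀ hn3]
      refine h1.trans (le_of_eq ?_)
      rw [div_eq_mul_inv]; ring
    have h3 : ‖e‖ ≤ 2 * (K * N * M) * ((n : ℝ) ^ 2)⁻¹ := by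
      rw [← div_eq_mul_inv, le_div_iff₀ hn3]
      nlinarith [norm_nonneg e]
    have h4 : ‖e σ‖ ≤ ‖e‖ := norm_le_pi_norm e σ
    rw [Real.norm_of_nonneg (show (0 : ℝ) ≤ ((n : ℝ) ^ 2)⁻¹ by positivity)]
    exact h4.trans h3
  refine ⟨?_, hO⟩
  have hsq : Tendsto (fun n : ℕ => ((n : ℝ) ^ 2)⁻¹) atTop (nhds 0) :=
    ((tendsto_pow_atTop two_ne_zero).comp tendsto_natCast_atTop_atTop).inv_tendsto_atTop
  have := (hO.trans_tendsto hsq).add_const (Mob σ)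
  simpa using this
end
end
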